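/- Let R be a commutative Noetherian ring and 𝔞 a proper ideal of R with dim R/𝔞 = d ≥ 0. Then an 𝔞-torsion R-module M is 𝔞-cofinite if and only if the R-module Ext^i_R(R/𝔞, M) is finitely generated for every integer 0 ≤ i ≤ d. -/

import Mathlib

open CategoryTheory

universe u

/-- The `R`-module `Ext^i_R(N, M)` for two `R`-modules (objects of `ModuleCat R`). -/
noncomputable def extObj {R : Type u} [CommRing R] (N M : ModuleCat.{u} R) (i : ℕ) :
    ModuleCat.{u} R :=
  ((Ext R (ModuleCat.{u} R) i).obj (Opposite.op N)).obj M

/-- The `R`-module `Ext^i_R(R/𝔞, M)`. -/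
noncomputable def extIdeal {R : Type u} [CommRing R] (𝔞 : Ideal R) (i : ℕ)
    (M : ModuleCat.{u} R) : ModuleCat.{u} R :=
  extObj (ModuleCat.of R (R ⧸ 𝔞)) M i

/-- An `R`-module `M` is `𝔞`-cofinite if `Supp_R M ⊆ V(𝔞)` and `Ext^i_R(R/𝔞, M)` is a finitely
generated `R`-module for every `i ≥ 0`. -/
def IsCofinite {R : Type u} [CommRing R] (𝔞 : Ideal R) (M : ModuleCat.{u} R) : Prop :=
  Module.support R M ⊆ PrimeSpectrum.zeroLocus (𝔞 : Set R) ∧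
    ∀ i : ℕ, Module.Finite R (extIdeal 𝔞 i M)

/-- The Krull dimension `dim_R M` of an `R`-module `M`: the Krull dimension of its support,
i.e. the supremum of `dim R/𝔭` over primes `𝔭` in the support of `M`. -/
noncomputable def moduleDim (R : Type u) [CommRing R] (M : Type u) [AddCommGroup M]
    [Module R M] : WithBot ℕ∞ :=
  Order.krullDim (Module.support R M)

/-- An `R`-module `M` is in `FD_{≤n}` if there is a finitely generated submodule `N ⊆ M`
with `dim_R (M/N) ≤ n`. -/
def MemFD (R : Type u) [CommRing R] (n : ℕ) (M : Type u) [AddCommGroup M] [Module R M] : Prop :=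
  ∃ N : Submodule R M, N.FG ∧ moduleDim R (M ⧸ N) ≤ (n : WithBot ℕ∞)

/-- An `R`-module `M` is `𝔞`-torsion if every element is annihilated by some power of `𝔞`. -/
def IsTorsionIdeal {R : Type u} [CommRing R] (𝔞 : Ideal R) (M : Type u) [AddCommGroup M]
    [Module R M] : Prop :=
  ∀ m : M, ∃ n : ℕ, ∀ a ∈ 𝔞 ^ n, a • m = 0

/-- The arithmetic rank of an ideal `𝔞`: the least `n` such that there exist `a₁, …, aₙ ∈ R`
with `Rad (a₁, …, aₙ) = Rad 𝔞`. -/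
noncomputable def arithRank {R : Type u} [CommRing R] (𝔞 : Ideal R) : ℕ :=
  sInf {n : ℕ | ∃ f : Fin n → R, (Ideal.span (Set.range f)).radical = 𝔞.radical}

/-!
Let `S` be a Serre class and suppose that `u ∈ b` acts on `M` surjectively up to `S`; in general
this is so only after dividing out `0 :_M b^k`. Since `u` acts as zero on `Ext(R/b, -)`, the
factorization `M → uM → M` of `u` shows that, up to `S`, `Ext^{i+1}(R/b, M)` is a quotient of
`Ext^{i+1}(R/b, 0 :_M u)`. As `0 :_M u` has a bigger annihilator, one can induct. When
`dim R/b ≤ 0` such a `u` exists for Artinian reasons; after localizing away from the minimal primes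
of `b` of positive coheight the same argument shows that all `Ext^i(R/b, M)` are generically
finitely generated, and it settles `dim R/b ≤ 1`.

The passage from `dim R/b ≤ e` to `e + 1`, with `e ≥ 1`, applies the induction hypothesis to
`b + (z)`, for `z` avoiding the minimal primes of `b` of coheight `> e`: the kernel of `z` on
`W = Ext^i(R/b, M)` is Noetherian. As `M` is then torsion with respect to a smaller ideal than
`b + (z)`, the statement proved by induction allows for finitely many additional generators, at the
price of as many further degrees; a Koszul complex reduces it to modules torsion with respect to
the larger ideal.

`W` is finitely generated up to `s`-power torsion for one such `s`, so one may assume that `W` is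
`s`-power torsion with Noetherian `s`-kernel. If `W` is not Noetherian, a localization of it
contains a nonzero submodule `B` divisible by `s` whose `s`-kernel has finite length. After
completing `s`-adically, the Tate module of `B` is a nonzero finitely generated module, free of
`s`-torsion. An associated prime of it has coheight at most one, hence contains an element `z` still
avoiding the primes of large coheight, and `z` has a non-Noetherian kernel on `B`. The completion
being flat, `Ext` commutes with this base change, and the Noetherian kernels found above give a
contradiction.
-/

namespace ExtCofinite

open TensorProduct
open scoped Pointwise

/-- A short exact sequence `0 → A → B → C → 0` of unbundled modules. -/
structure IsSES {R : Type u} [CommRing R] {A B C : Type u} [AddCommGroup A] [Module R A]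
    [AddCommGroup B] [Module R B] [AddCommGroup C] [Module R C]
    (f : A →ₗ[R] B) (g : B →ₗ[R] C) : Prop where
  injective : Function.Injective f
  surjective : Function.Surjective g
  exact : Function.Exact f g

/-- `Ext^i_R(N, M)` for unbundled modules, in the derived-category model `Abelian.Ext`, which
carries the long exact sequences. -/
abbrev ModExt (R : Type u) [CommRing R] (N M : Type u) [AddCommGroup N] [Module R N]
    [AddCommGroup M] [Module R M] (i : ℕ) : Type u :=
  Abelian.Ext (ModuleCat.of R N) (ModuleCat.of R M) i

/-! ### Long exact sequences of `Ext` for unbundled modules -/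

section ShortComplex

variable {R : Type u} [CommRing R] {S : ShortComplex (ModuleCat.{u} R)} (hS : S.ShortExact)
  {X : ModuleCat.{u} R} {n : ℕ}

lemma comp_extClass_comp_mk₀ (y : Abelian.Ext X S.X₃ n) :
    (y.comp hS.extClass rfl).comp (Abelian.Ext.mk₀ S.f) (add_zero (n + 1)) = 0 := by
  rw [Abelian.Ext.comp_assoc_of_third_deg_zero, hS.extClass_comp, Abelian.Ext.comp_zero]

lemma comp_mk₀_comp_extClass (y : Abelian.Ext X S.X₂ n) :
    (y.comp (Abelian.Ext.mk₀ S.g) (add_zero n)).comp hS.extClass rfl = 0 := by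
  rw [Abelian.Ext.comp_assoc_of_second_deg_zero, hS.comp_extClass, Abelian.Ext.comp_zero]

lemma extClass_comp_mk₀_comp (y : Abelian.Ext S.X₂ X n) :
    hS.extClass.comp ((Abelian.Ext.mk₀ S.f).comp y (zero_add n)) (add_comm 1 n) = 0 := by
  rw [← Abelian.Ext.comp_assoc_of_second_deg_zero, hS.extClass_comp, Abelian.Ext.zero_comp]

lemma mk₀_comp_extClass_comp (y : Abelian.Ext S.X₁ X n) :
    (Abelian.Ext.mk₀ S.g).comp (hS.extClass.comp y (add_comm 1 n)) (zero_add (n + 1)) = 0 := by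
  rw [← Abelian.Ext.comp_assoc _ _ _ (zero_add 1) (add_comm 1 n) (by omega), hS.comp_extClass,
    Abelian.Ext.zero_comp]

end ShortComplex

section LongExactSequences

variable {R : Type u} [CommRing R]
  {A B C N M : Type u} [AddCommGroup A] [Module R A] [AddCommGroup B] [Module R B]
  [AddCommGroup C] [Module R C] [AddCommGroup N] [Module R N] [AddCommGroup M] [Module R M]
  {f : A →ₗ[R] B} {g : B →ₗ[R] C}

lemma IsSES.of_submodule (K : Submodule R M) : IsSES K.subtype K.mkQ :=
  ⟨K.injective_subtype, K.mkQ_surjective, LinearMap.exact_subtype_mkQ K⟩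

lemma IsSES.of_surjective (hg : Function.Surjective g) : IsSES (LinearMap.ker g).subtype g :=
  ⟨Submodule.injective_subtype _, hg, LinearMap.exact_subtype_ker_map g⟩

lemma IsSES.of_rangeRestrict (f : A →ₗ[R] B) : IsSES (LinearMap.ker f).subtype f.rangeRestrict where
  injective := Submodule.injective_subtype _
  surjective := LinearMap.surjective_rangeRestrict _
  exact := by
    rw [LinearMap.exact_iff, LinearMap.ker_rangeRestrict, Submodule.range_subtype]

lemma IsSES.shortExact (h : IsSES f g) :
    (ShortComplex.moduleCatMk f g h.exact.linearMap_comp_eq_zero).ShortExact where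
  exact := (ShortComplex.moduleCat_exact_iff _).2 fun x hx => (h.exact x).1 hx
  mono_f := (ModuleCat.mono_iff_injective _).2 h.injective
  epi_g := (ModuleCat.epi_iff_surjective _).2 h.surjective

/-- The map induced by `f` on `Ext` in the second variable. -/
noncomputable def ModExt.map (N : Type u) [AddCommGroup N] [Module R N] (f : A →ₗ[R] B) (i : ℕ) :
    ModExt R N A i →ₗ[R] ModExt R N B i :=
  (Abelian.Ext.mk₀ (ModuleCat.ofHom f)).postcompOfLinear R _ (add_zero i)

/-- The map induced by `f` on `Ext` in the first variable. -/
noncomputable def ModExt.comap (f : A →ₗ[R] B) (M : Type u) [AddCommGroup M] [Module R M] (i : ℕ) :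
    ModExt R B M i →ₗ[R] ModExt R A M i :=
  (Abelian.Ext.mk₀ (ModuleCat.ofHom f)).precompOfLinear R _ (zero_add i)

/-- The connecting map of the covariant long exact sequence. -/
noncomputable def ModExt.mapδ (h : IsSES f g) (N : Type u) [AddCommGroup N] [Module R N] (i : ℕ) :
    ModExt R N C i →ₗ[R] ModExt R N A (i + 1) :=
  h.shortExact.extClass.postcompOfLinear R _ rfl

/-- The connecting map of the contravariant long exact sequence. -/
noncomputable def ModExt.comapδ (h : IsSES f g) (M : Type u) [AddCommGroup M] [Module R M]
    (i : ℕ) : ModExt R A M i →ₗ[R] ModExt R C M (i + 1) :=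
  h.shortExact.extClass.precompOfLinear R _ (add_comm 1 i)

namespace ModExt

lemma map_map (f : A →ₗ[R] B) (g : B →ₗ[R] C) (i : ℕ) (x : ModExt R N A i) :
    map N g i (map N f i x) = map N (g ∘ₗ f) i x := by
  simp [map]

protected lemma map_id (i : ℕ) (x : ModExt R N A i) :
    map N (LinearMap.id : A →ₗ[R] A) i x = x := by
  simp [map]

protected lemma map_zero (i : ℕ) (x : ModExt R N A i) : map N (0 : A →ₗ[R] B) i x = 0 := by
  simp [map]

protected lemma map_add (f f' : A →ₗ[R] B) (i : ℕ) (x : ModExt R N A i) :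
    map N (f + f') i x = map N f i x + map N f' i x := by
  simp only [map, ModuleCat.ofHom_add, Abelian.Ext.mk₀_add]
  exact Abelian.Ext.comp_add _ _ _ (add_zero i)

protected lemma map_smul (r : R) (f : A →ₗ[R] B) (i : ℕ) (x : ModExt R N A i) :
    map N (r • f) i x = r • map N f i x := by
  have : ModuleCat.ofHom (r • f) = r • ModuleCat.ofHom f := rfl
  simp only [map, this, Abelian.Ext.mk₀_smul]
  exact Abelian.Ext.comp_smul _ _ (add_zero i) _

lemma comap_comap (f : A →ₗ[R] B) (g : B →ₗ[R] C) (i : ℕ) (x : ModExt R C M i) :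
    comap f M i (comap g M i x) = comap (g ∘ₗ f) M i x := by
  simp [comap]

lemma comap_id (i : ℕ) (x : ModExt R A M i) :
    comap (LinearMap.id : A →ₗ[R] A) M i x = x := by
  simp [comap]

lemma comap_zero (i : ℕ) (x : ModExt R B M i) : comap (0 : A →ₗ[R] B) M i x = 0 := by
  simp [comap]

lemma comap_smul (r : R) (f : A →ₗ[R] B) (i : ℕ) (x : ModExt R B M i) :
    comap (r • f) M i x = r • comap f M i x := by
  have : ModuleCat.ofHom (r • f) = r • ModuleCat.ofHom f := rfl
  simp only [comap, this, Abelian.Ext.mk₀_smul]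
  exact Abelian.Ext.smul_comp _ _ (zero_add i) _

lemma map_lsmul (a : R) (i : ℕ) (x : ModExt R N A i) :
    map N (LinearMap.lsmul R A a) i x = a • x := by
  have h : LinearMap.lsmul R A a = a • LinearMap.id := rfl
  rw [h, ModExt.map_smul, ModExt.map_id]

lemma comap_lsmul (a : R) (i : ℕ) (x : ModExt R A M i) :
    comap (LinearMap.lsmul R A a) M i x = a • x := by
  have h : LinearMap.lsmul R A a = a • LinearMap.id := rfl
  rw [h, comap_smul, comap_id]

lemma annihilator_le_left (N M : Type u) [AddCommGroup N] [Module R N] [AddCommGroup M]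
    [Module R M] (i : ℕ) : Module.annihilator R N ≤ Module.annihilator R (ModExt R N M i) := by
  refine fun a ha => Module.mem_annihilator.2 fun x => ?_
  have h : LinearMap.lsmul R N a = 0 := LinearMap.ext fun y => Module.mem_annihilator.1 ha y
  rw [← comap_lsmul, h, comap_zero]

/-- An isomorphism of modules induces an isomorphism on `Ext` in the second variable. -/
noncomputable def mapEquiv (N : Type u) [AddCommGroup N] [Module R N] (e : A ≃ₗ[R] B) (i : ℕ) :
    ModExt R N A i ≃ₗ[R] ModExt R N B i :=
  LinearEquiv.ofLinearMap (map N e.toLinearMap i) (map N e.symm.toLinearMap i)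
    (LinearMap.ext fun x => by
      rw [LinearMap.comp_apply, map_map, LinearEquiv.comp_coe, LinearEquiv.symm_trans_self]
      exact ModExt.map_id i x)
    (LinearMap.ext fun x => by
      rw [LinearMap.comp_apply, map_map, LinearEquiv.comp_coe, LinearEquiv.self_trans_symm]
      exact ModExt.map_id i x)

/-- An isomorphism of modules induces an isomorphism on `Ext` in the first variable. -/
noncomputable def comapEquiv (e : A ≃ₗ[R] B) (M : Type u) [AddCommGroup M] [Module R M] (i : ℕ) :
    ModExt R B M i ≃ₗ[R] ModExt R A M i :=
  LinearEquiv.ofLinearMap (comap e.toLinearMap M i) (comap e.symm.toLinearMap M i)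
    (LinearMap.ext fun x => by
      rw [LinearMap.comp_apply, comap_comap, LinearEquiv.comp_coe, LinearEquiv.self_trans_symm]
      exact comap_id i x)
    (LinearMap.ext fun x => by
      rw [LinearMap.comp_apply, comap_comap, LinearEquiv.comp_coe, LinearEquiv.symm_trans_self]
      exact comap_id i x)

lemma exact_mapδ_map (h : IsSES f g) (N : Type u) [AddCommGroup N] [Module R N] (i : ℕ) :
    Function.Exact (mapδ h N i) (map N f (i + 1)) := by
  refine fun x => ⟨fun hx => Abelian.Ext.covariant_sequence_exact₁ _ h.shortExact x hx rfl, ?_⟩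
  rintro ⟨y, rfl⟩
  exact comp_extClass_comp_mk₀ h.shortExact y

lemma exact_map_map (h : IsSES f g) (N : Type u) [AddCommGroup N] [Module R N] (i : ℕ) :
    Function.Exact (map N f i) (map N g i) := by
  refine fun x => ⟨fun hx => Abelian.Ext.covariant_sequence_exact₂ _ h.shortExact x hx, ?_⟩
  rintro ⟨y, rfl⟩
  rw [map_map, h.exact.linearMap_comp_eq_zero, ModExt.map_zero]

lemma exact_map_mapδ (h : IsSES f g) (N : Type u) [AddCommGroup N] [Module R N] (i : ℕ) :
    Function.Exact (map N g i) (mapδ h N i) := by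
  refine fun x => ⟨fun hx => Abelian.Ext.covariant_sequence_exact₃ _ h.shortExact x rfl hx, ?_⟩
  rintro ⟨y, rfl⟩
  exact comp_mk₀_comp_extClass h.shortExact y

lemma exact_comap_comapδ (h : IsSES f g) (M : Type u) [AddCommGroup M] [Module R M] (i : ℕ) :
    Function.Exact (comap f M i) (comapδ h M i) := by
  refine fun x => ⟨fun hx =>
    Abelian.Ext.contravariant_sequence_exact₁ h.shortExact _ x (add_comm 1 i) hx, ?_⟩
  rintro ⟨y, rfl⟩
  exact extClass_comp_mk₀_comp h.shortExact y

lemma exact_comap_comap (h : IsSES f g) (M : Type u) [AddCommGroup M] [Module R M] (i : ℕ) :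
    Function.Exact (comap g M i) (comap f M i) := by
  refine fun x => ⟨fun hx => Abelian.Ext.contravariant_sequence_exact₂ h.shortExact _ x hx, ?_⟩
  rintro ⟨y, rfl⟩
  rw [comap_comap, h.exact.linearMap_comp_eq_zero, comap_zero]

lemma exact_comapδ_comap (h : IsSES f g) (M : Type u) [AddCommGroup M] [Module R M] (i : ℕ) :
    Function.Exact (comapδ h M i) (comap g M (i + 1)) := by
  refine fun x => ⟨fun hx =>
    Abelian.Ext.contravariant_sequence_exact₃ h.shortExact _ x hx (add_comm 1 i), ?_⟩
  rintro ⟨y, rfl⟩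
  exact mk₀_comp_extClass_comp h.shortExact y

/-- The identification `Ext^0(N, M) = Hom(N, M)`. -/
noncomputable def zeroEquiv (N M : Type u) [AddCommGroup N] [Module R N]
    [AddCommGroup M] [Module R M] : ModExt R N M 0 ≃ₗ[R] (N →ₗ[R] M) :=
  Abelian.Ext.linearEquiv₀.trans ModuleCat.homLinearEquiv

lemma zeroEquiv_map (f : A →ₗ[R] B) (x : ModExt R N A 0) :
    zeroEquiv N B (map N f 0 x) = f ∘ₗ zeroEquiv N A x := by
  obtain ⟨x, rfl⟩ := (zeroEquiv N A).symm.surjective x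
  rw [LinearEquiv.apply_symm_apply, ← LinearEquiv.eq_symm_apply]
  simp only [zeroEquiv, map, LinearEquiv.trans_symm, LinearEquiv.trans_apply,
    Abelian.Ext.linearEquiv₀_symm_apply]
  exact Abelian.Ext.mk₀_comp_mk₀ _ _

lemma zeroEquiv_comap (f : A →ₗ[R] B) (x : ModExt R B M 0) :
    zeroEquiv A M (comap f M 0 x) = zeroEquiv B M x ∘ₗ f := by
  obtain ⟨x, rfl⟩ := (zeroEquiv B M).symm.surjective x
  rw [LinearEquiv.apply_symm_apply, ← LinearEquiv.eq_symm_apply]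
  simp only [zeroEquiv, comap, LinearEquiv.trans_symm, LinearEquiv.trans_apply,
    Abelian.Ext.linearEquiv₀_symm_apply]
  exact Abelian.Ext.mk₀_comp_mk₀ _ _

lemma map_zero_injective (hf : Function.Injective f) : Function.Injective (map N f 0) := by
  intro x y hxy
  have h := congrArg (zeroEquiv N B) hxy
  rw [zeroEquiv_map, zeroEquiv_map] at h
  exact (zeroEquiv N A).injective ((LinearMap.cancel_left hf).1 h)

lemma comap_zero_injective (hg : Function.Surjective g) : Function.Injective (comap g M 0) := by
  intro x y hxy
  have h := congrArg (zeroEquiv B M) hxy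
  rw [zeroEquiv_comap, zeroEquiv_comap] at h
  exact (zeroEquiv C M).injective ((LinearMap.cancel_right hg).1 h)

lemma subsingleton_of_projective [Module.Projective R N] (i : ℕ) :
    Subsingleton (ModExt R N M (i + 1)) := by
  have : Projective (ModuleCat.of R N) := by
    rw [← IsProjective.iff_projective]; infer_instance
  exact Abelian.Ext.subsingleton_of_projective _ _ _

end ModExt

end LongExactSequences

/-- A Serre class of unbundled modules: it contains zero and the middle term of every three-term
exact sequence whose outer terms it contains. It is the unbundled counterpart of
`CategoryTheory.ObjectProperty.IsSerreClass`. -/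
structure SerreClass (R : Type u) [CommRing R] where
  mem : ∀ (V : Type u) [AddCommGroup V] [Module R V], Prop
  zero : mem PUnit.{u + 1}
  of_exact : ∀ {U V W : Type u} [AddCommGroup U] [Module R U] [AddCommGroup V] [Module R V]
    [AddCommGroup W] [Module R W] (f : U →ₗ[R] V) (g : V →ₗ[R] W),
    Function.Exact f g → mem U → mem W → mem V

namespace SerreClass

variable {R : Type u} [CommRing R] (S : SerreClass R)
  {U V W : Type u} [AddCommGroup U] [Module R U] [AddCommGroup V] [Module R V]
  [AddCommGroup W] [Module R W]

lemma of_injective (f : V →ₗ[R] W) (hf : Function.Injective f) (h : S.mem W) : S.mem V :=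
  S.of_exact (0 : PUnit.{u + 1} →ₗ[R] V) f
    (fun x => by simp [map_eq_zero_iff f hf, eq_comm]) S.zero h

lemma of_surjective (f : V →ₗ[R] W) (hf : Function.Surjective f) (h : S.mem V) : S.mem W :=
  S.of_exact f (0 : W →ₗ[R] PUnit.{u + 1}) (fun x => by simp [hf x]) h S.zero

lemma of_equiv (e : V ≃ₗ[R] W) (h : S.mem V) : S.mem W :=
  S.of_surjective e.toLinearMap e.surjective h

lemma of_subsingleton [Subsingleton V] : S.mem V :=
  S.of_injective (0 : V →ₗ[R] PUnit.{u + 1}) (Function.injective_of_subsingleton _) S.zero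

lemma of_ses {f : U →ₗ[R] V} {g : V →ₗ[R] W} (h : IsSES f g) (hU : S.mem U) (hW : S.mem W) :
    S.mem V :=
  S.of_exact f g h.exact hU hW

lemma prod (hU : S.mem U) (hW : S.mem W) : S.mem (U × W) :=
  S.of_exact (LinearMap.inl R U W) (LinearMap.snd R U W) Function.Exact.inl_snd hU hW

lemma pi (h : S.mem V) (n : ℕ) : S.mem (Fin n → V) := by
  induction n with
  | zero => exact S.of_subsingleton
  | succ n ih => exact S.of_equiv (Fin.consLinearEquiv R fun _ : Fin (n + 1) => V) (S.prod h ih)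

end SerreClass

/-! ### `Ext` and Serre classes -/

section ExtMembership

variable {R : Type u} [CommRing R] {S : SerreClass R}
  {A B C N M : Type u} [AddCommGroup A] [Module R A] [AddCommGroup B] [Module R B]
  [AddCommGroup C] [Module R C] [AddCommGroup N] [Module R N] [AddCommGroup M] [Module R M]
  {f : A →ₗ[R] B} {g : B →ₗ[R] C} {i : ℕ}

namespace SerreClass

lemma ext_right_mem₁ (h : IsSES f g) (hC : S.mem (ModExt R N C i))
    (hB : S.mem (ModExt R N B (i + 1))) : S.mem (ModExt R N A (i + 1)) :=
  S.of_exact _ _ (ModExt.exact_mapδ_map h N i) hC hB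

lemma ext_right_mem₂ (h : IsSES f g) (hA : S.mem (ModExt R N A i))
    (hC : S.mem (ModExt R N C i)) : S.mem (ModExt R N B i) :=
  S.of_exact _ _ (ModExt.exact_map_map h N i) hA hC

lemma ext_right_mem₃ (h : IsSES f g) (hB : S.mem (ModExt R N B i))
    (hA : S.mem (ModExt R N A (i + 1))) : S.mem (ModExt R N C i) :=
  S.of_exact _ _ (ModExt.exact_map_mapδ h N i) hB hA

lemma ext_left_mem₂ (h : IsSES f g) (hA : S.mem (ModExt R A M i))
    (hC : S.mem (ModExt R C M i)) : S.mem (ModExt R B M i) :=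
  S.of_exact _ _ (ModExt.exact_comap_comap h M i) hC hA

lemma ext_left_mem₃ (h : IsSES f g) (hA : S.mem (ModExt R A M i))
    (hB : S.mem (ModExt R B M (i + 1))) : S.mem (ModExt R C M (i + 1)) :=
  S.of_exact _ _ (ModExt.exact_comapδ_comap h M i) hA hB

lemma ext_zero_mem_of_injective (hf : Function.Injective f) (hB : S.mem (ModExt R N B 0)) :
    S.mem (ModExt R N A 0) :=
  S.of_injective _ (ModExt.map_zero_injective hf) hB

lemma ext_zero_mem_of_surjective (hg : Function.Surjective g) (hB : S.mem (ModExt R B M 0)) :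
    S.mem (ModExt R C M 0) :=
  S.of_injective _ (ModExt.comap_zero_injective hg) hB

lemma ext_right_mem_of_equiv (e : A ≃ₗ[R] B) (h : S.mem (ModExt R N A i)) :
    S.mem (ModExt R N B i) :=
  S.of_equiv (ModExt.mapEquiv N e i) h

lemma ext_left_mem_of_equiv (e : A ≃ₗ[R] B) (h : S.mem (ModExt R A M i)) :
    S.mem (ModExt R B M i) :=
  S.of_equiv (ModExt.comapEquiv e M i).symm h

lemma ext_zero_mem_iff : S.mem (ModExt R N M 0) ↔ S.mem (N →ₗ[R] M) :=
  ⟨S.of_equiv (ModExt.zeroEquiv N M), S.of_equiv (ModExt.zeroEquiv N M).symm⟩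

lemma hom_mem [Module.Finite R N] (hM : S.mem M) : S.mem (N →ₗ[R] M) := by
  obtain ⟨n, p, hp⟩ := Module.Finite.exists_fin' R N
  exact S.of_injective (p.lcomp R M) (fun _ _ h => (LinearMap.cancel_right hp).1 h)
    (S.of_equiv (Module.piEquiv (Fin n) R M) (S.pi hM n))

lemma ext_mem [IsNoetherianRing R] [Module.Finite R N] (hM : S.mem M) (i : ℕ) :
    S.mem (ModExt R N M i) := by
  induction i generalizing N with
  | zero => exact ext_zero_mem_iff.2 (hom_mem hM)
  | succ i ih =>
    obtain ⟨n, p, hp⟩ := Module.Finite.exists_fin' R N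
    have := ModExt.subsingleton_of_projective (R := R) (N := Fin n → R) (M := M) i
    exact ext_left_mem₃ (IsSES.of_surjective hp) (ih (N := LinearMap.ker p)) S.of_subsingleton

lemma ext_mem_of_subsingleton_left [Subsingleton N] : S.mem (ModExt R N M i) := by
  cases i with
  | zero => exact ext_zero_mem_iff.2 S.of_subsingleton
  | succ i =>
    have := ModExt.subsingleton_of_projective (R := R) (N := N) (M := M) i
    exact S.of_subsingleton

lemma ext_pi_mem (h : S.mem (ModExt R N M i)) (n : ℕ) : S.mem (ModExt R (Fin n → N) M i) := by
  induction n with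
  | zero => exact ext_mem_of_subsingleton_left
  | succ n ih =>
    refine ext_left_mem_of_equiv (Fin.consLinearEquiv R fun _ : Fin (n + 1) => N) ?_
    exact ext_left_mem₂ (f := LinearMap.inl R N (Fin n → N)) (g := LinearMap.snd R N (Fin n → N))
      ⟨LinearMap.inl_injective, LinearMap.snd_surjective, Function.Exact.inl_snd⟩ h ih

end SerreClass

lemma exists_surjective_pi_quotient [Module.Finite R N] {b : Ideal R}
    (hN : b ≤ Module.annihilator R N) :
    ∃ (n : ℕ) (p : (Fin n → R ⧸ b) →ₗ[R] N), Function.Surjective p := by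
  have hb : Module.IsTorsionBySet R N b := (Module.isTorsionBySet_iff_subset_annihilator R N).2 hN
  let := hb.module
  have : Module.Finite (R ⧸ b) N := Module.Finite.of_restrictScalars_finite R (R ⧸ b) N
  obtain ⟨n, p, hp⟩ := Module.Finite.exists_fin' (R ⧸ b) N
  exact ⟨n, p.restrictScalars R, hp⟩

lemma le_annihilator_pi_quotient (b : Ideal R) (n : ℕ) :
    b ≤ Module.annihilator R (Fin n → R ⧸ b) := by
  refine fun a ha => Module.mem_annihilator.2 fun x => funext fun j => ?_
  rw [← Ideal.annihilator_quotient (I := b)] at ha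
  exact Module.mem_annihilator.1 ha (x j)

namespace SerreClass

lemma ext_mem_of_le_annihilator [IsNoetherianRing R] {b : Ideal R} {t : ℕ}
    (h : ∀ i ≤ t, S.mem (ModExt R (R ⧸ b) M i)) [Module.Finite R N]
    (hN : b ≤ Module.annihilator R N) (hi : i ≤ t) : S.mem (ModExt R N M i) := by
  obtain ⟨n, p, hp⟩ := exists_surjective_pi_quotient hN
  induction i generalizing N n with
  | zero => exact ext_zero_mem_of_surjective hp (ext_pi_mem (h 0 hi) n)
  | succ i ih =>
    have hK : b ≤ Module.annihilator R (LinearMap.ker p) :=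
      (le_annihilator_pi_quotient b n).trans
        (LinearMap.annihilator_le_of_injective _ (LinearMap.ker p).injective_subtype)
    obtain ⟨m, q, hq⟩ := exists_surjective_pi_quotient hK
    exact ext_left_mem₃ (IsSES.of_surjective hp) (ih hK (by omega) m q hq) (ext_pi_mem (h _ hi) n)

lemma ext_mem_of_pow_le_annihilator [IsNoetherianRing R] {b : Ideal R} {t : ℕ}
    (h : ∀ i ≤ t, S.mem (ModExt R (R ⧸ b) M i)) (k : ℕ) [Module.Finite R N]
    (hN : b ^ k ≤ Module.annihilator R N) (hi : i ≤ t) : S.mem (ModExt R N M i) := by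
  induction k generalizing N with
  | zero => exact ext_mem_of_le_annihilator h (le_top.trans (by simpa using hN)) hi
  | succ k ih =>
    let K : Submodule R N := b ^ k • ⊤
    have hK : b ≤ Module.annihilator R K := by
      rw [← Submodule.annihilator, Submodule.le_annihilator_iff, ← Submodule.mul_smul,
        ← pow_succ', ← le_bot_iff]
      exact Submodule.smul_le.2 fun a ha x _ => Module.mem_annihilator.1 (hN ha) x
    have hNK : b ^ k ≤ Module.annihilator R (N ⧸ K) := by
      rw [Submodule.annihilator_quotient]
      exact fun a ha => Submodule.mem_colon.2 fun x _ => Submodule.smul_mem_smul ha trivial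
    exact ext_left_mem₂ (IsSES.of_submodule K) (ext_mem_of_le_annihilator h hK hi) (ih hNK)

end SerreClass

/-- The submodule `0 :_M b` of elements annihilated by the ideal `b`. -/
abbrev torsionByIdeal (b : Ideal R) (M : Type u) [AddCommGroup M] [Module R M] : Submodule R M :=
  Submodule.torsionBySet R M (b : Set R)

lemma mem_torsionByIdeal {b : Ideal R} {m : M} :
    m ∈ torsionByIdeal b M ↔ ∀ a ∈ b, a • m = 0 := by
  simp [torsionByIdeal, Submodule.mem_torsionBySet_iff]

/-- The identification of `Hom(R/b, M)` with `0 :_M b`, by evaluation at `1`. -/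
noncomputable def homQuotientEquiv (b : Ideal R) (M : Type u) [AddCommGroup M] [Module R M] :
    ((R ⧸ b) →ₗ[R] M) ≃ₗ[R] torsionByIdeal b M where
  toFun φ := ⟨φ 1, mem_torsionByIdeal.2 fun a ha => by
    rw [← map_smul, Algebra.smul_def, mul_one, Ideal.Quotient.algebraMap_eq,
      Ideal.Quotient.eq_zero_iff_mem.2 ha, map_zero]⟩
  map_add' _ _ := rfl
  map_smul' _ _ := rfl
  invFun m := Submodule.liftQ b (LinearMap.toSpanSingleton R M m)
    fun a ha => mem_torsionByIdeal.1 m.2 a ha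
  left_inv φ := by
    ext
    exact one_smul R (φ 1)
  right_inv m := by
    ext
    exact one_smul R (m : M)

namespace SerreClass

lemma ext_quotient_zero_mem_iff (b : Ideal R) :
    S.mem (ModExt R (R ⧸ b) M 0) ↔ S.mem (torsionByIdeal b M) :=
  ext_zero_mem_iff.trans
    ⟨S.of_equiv (homQuotientEquiv b M), S.of_equiv (homQuotientEquiv b M).symm⟩

lemma torsionByIdeal_pow_mem [IsNoetherianRing R] (b : Ideal R)
    (h : S.mem (torsionByIdeal b M)) (k : ℕ) : S.mem (torsionByIdeal (b ^ k) M) := by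
  rw [← ext_quotient_zero_mem_iff] at h ⊢
  refine ext_mem_of_pow_le_annihilator (t := 0) (fun i hi => ?_) k
    (Ideal.annihilator_quotient (I := b ^ k)).ge le_rfl
  rwa [Nat.le_zero.1 hi]

end SerreClass

end ExtMembership

/-! ### Artinian torsion modules -/

section Artinian

variable {R : Type u} [CommRing R] {M N : Type u} [AddCommGroup M] [Module R M]
  [AddCommGroup N] [Module R N] {b : Ideal R}

lemma IsTorsionIdeal.of_injective (h : IsTorsionIdeal b M) (f : N →ₗ[R] M)
    (hf : Function.Injective f) : IsTorsionIdeal b N := by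
  intro m
  obtain ⟨n, hn⟩ := h (f m)
  exact ⟨n, fun a ha => hf (by rw [map_smul, hn a ha, map_zero])⟩

lemma IsTorsionIdeal.of_surjective (h : IsTorsionIdeal b M) (f : M →ₗ[R] N)
    (hf : Function.Surjective f) : IsTorsionIdeal b N := by
  intro m
  obtain ⟨m, rfl⟩ := hf m
  obtain ⟨n, hn⟩ := h m
  exact ⟨n, fun a ha => by rw [← map_smul, hn a ha, map_zero]⟩

lemma exists_forall_eq_of_antitone₂ {α : Type*} [PartialOrder α] [WellFoundedLT α]
    {G : ℕ → ℕ → α} (hG : ∀ ⦃n n' k k'⦄, n ≤ n' → k ≤ k' → G n' k' ≤ G n k) :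
    ∃ n₀, ∀ n, n₀ ≤ n → ∀ k, G n₀ k = G n k := by
  obtain ⟨d, hd⟩ := WellFoundedLT.antitone_chain_condition (f := fun n => G n n)
    fun _ _ h => hG h h
  choose f hf using fun k => WellFoundedLT.antitone_chain_condition (f := fun n => G n k)
    fun _ _ h => hG h le_rfl
  set n₀ := max d ((Finset.range d).sup f)
  refine ⟨n₀, fun n hn k => ?_⟩
  rcases lt_or_ge k d with hk | hk
  · have hfk : f k ≤ n₀ := le_max_of_le_right (Finset.le_sup (Finset.mem_range.2 hk))
    exact (hf k n₀ hfk).symm.trans (hf k n (hfk.trans hn))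
  · refine le_antisymm ?_ (hG hn le_rfl)
    calc G n₀ k ≤ G d d := hG (le_max_left _ _) hk
      _ = G (max n k) (max n k) := hd _ (hk.trans (le_max_right _ _))
      _ ≤ G n k := hG (le_max_left _ _) (le_max_right _ _)

lemma le_of_forall_pow_smul_inf_ker_le {x : R} (hx : ∀ m : M, ∃ n : ℕ, x ^ n • m = 0)
    {N N' : Submodule R M} (hN : N' ≤ N)
    (h : ∀ k : ℕ, x ^ k • N ⊓ LinearMap.ker (LinearMap.lsmul R M x) ≤ x ^ k • N') : N ≤ N' := by
  have hpow (k : ℕ) : ∀ m ∈ N, x ^ k • m = 0 → m ∈ N' := by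
    induction k with
    | zero =>
      intro m _ hm
      rw [pow_zero, one_smul] at hm
      exact hm ▸ zero_mem _
    | succ k ih =>
      intro m hm hkm
      obtain ⟨m', hm', he⟩ := h k ⟨Submodule.smul_mem_pointwise_smul m _ N hm, by
        change x • x ^ k • m = 0
        rw [smul_smul, ← pow_succ', hkm]⟩
      have := ih (m - m') (sub_mem hm (hN hm')) (by rw [smul_sub, sub_eq_zero]; exact he.symm)
      simpa using add_mem this hm'
  intro m hm
  obtain ⟨k, hk⟩ := hx m
  exact hpow k m hm hk

lemma isArtinian_of_ker_lsmul {x : R} (hx : ∀ m : M, ∃ n : ℕ, x ^ n • m = 0)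
    (hK : IsArtinian R (LinearMap.ker (LinearMap.lsmul R M x))) : IsArtinian R M := by
  rw [← monotone_stabilizes_iff_artinian]
  intro N
  set K := LinearMap.ker (LinearMap.lsmul R M x)
  have hanti {n n' : ℕ} (h : n ≤ n') : (N n').ofDual ≤ (N n).ofDual := N.monotone h
  have hsmul {n n' k k' : ℕ} (hn : n ≤ n') (hk : k ≤ k') :
      x ^ k' • (N n').ofDual ≤ x ^ k • (N n).ofDual := by
    rw [← Nat.add_sub_cancel' hk, pow_add, mul_smul]
    exact Submodule.map_mono ((Submodule.smul_le_self_of_tower _ _).trans (hanti hn))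
  obtain ⟨n₀, h₀⟩ := exists_forall_eq_of_antitone₂
    (G := fun n k => (x ^ k • (N n).ofDual).comap K.subtype)
    fun _ _ _ _ hn hk => Submodule.comap_mono (hsmul hn hk)
  refine ⟨n₀, fun n hn => congrArg OrderDual.toDual (le_antisymm ?_ (hanti hn) :
    (N n₀).ofDual = (N n).ofDual)⟩
  refine le_of_forall_pow_smul_inf_ker_le hx (hanti hn) fun k y hy => ?_
  exact (h₀ n hn k).le (x := ⟨y, hy.2⟩) hy.1

lemma isArtinian_of_torsionBySet (s : Finset R) (hM : ∀ x ∈ s, ∀ m : M, ∃ n : ℕ, x ^ n • m = 0)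
    (h : IsArtinian R (Submodule.torsionBySet R M (s : Set R))) : IsArtinian R M := by
  classical
  induction s using Finset.induction_on generalizing M with
  | empty =>
    refine isArtinian_of_surjective _
      (Submodule.torsionBySet R M ((∅ : Finset R) : Set R)).subtype fun m => ?_
    exact ⟨⟨m, by simp [Submodule.mem_torsionBySet_iff]⟩, rfl⟩
  | insert x s _ ih =>
    refine isArtinian_of_ker_lsmul (hM x (by simp)) (ih (fun y hy m => ?_) ?_)
    · obtain ⟨n, hn⟩ := hM y (by simp [hy]) m
      exact ⟨n, Subtype.ext (by simpa using hn)⟩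
    · set K := LinearMap.ker (LinearMap.lsmul R M x)
      let f := K.subtype ∘ₗ (Submodule.torsionBySet R K (s : Set R)).subtype
      have hf : ∀ m, f m ∈ Submodule.torsionBySet R M ((insert x s : Finset R) : Set R) := by
        rintro ⟨m, hm⟩
        rw [Submodule.mem_torsionBySet_iff]
        rintro ⟨a, ha⟩
        rcases Finset.mem_insert.1 ha with rfl | ha
        · exact m.2
        · exact congrArg Subtype.val ((Submodule.mem_torsionBySet_iff _ _).1 hm ⟨a, ha⟩)
      exact isArtinian_of_injective (f.codRestrict _ hf) fun _ _ h =>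
        Subtype.ext (Subtype.ext (congrArg Subtype.val h :))

lemma isArtinian_of_torsionByIdeal (hb : b.FG) (hM : IsTorsionIdeal b M)
    (h : IsArtinian R (torsionByIdeal b M)) : IsArtinian R M := by
  obtain ⟨s, rfl⟩ := hb
  rw [torsionByIdeal, ← Submodule.torsionBySet_eq_torsionBySet_span] at h
  refine isArtinian_of_torsionBySet s (fun x hx m => ?_) h
  obtain ⟨n, hn⟩ := hM m
  exact ⟨n, hn _ (Ideal.pow_mem_pow (Ideal.subset_span hx) n)⟩

lemma smul_eq_or_mem_radical_annihilator_of_supIrred [IsArtinian R M] {W : Submodule R M}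
    (hW : SupIrred W) (x : R) : x • W = W ∨ x ∈ W.annihilator.radical := by
  have hle (y : R) : y • W ≤ W := Submodule.smul_le_self_of_tower y W
  obtain ⟨n, hn⟩ := WellFoundedLT.antitone_chain_condition (f := fun n => x ^ n • W)
    (antitone_nat_of_succ_le fun n => by
      rw [pow_succ, mul_smul]
      exact Submodule.map_mono (hle x))
  have hfit : x ^ (n + 1) • W ⊔ W ⊓ LinearMap.ker (LinearMap.lsmul R M (x ^ (n + 1))) = W := by
    refine le_antisymm (sup_le (hle _) inf_le_left) fun w hw => ?_
    have hx : x ^ (n + 1) • w ∈ x ^ (n + 1) • x ^ (n + 1) • W := by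
      rw [smul_smul, ← pow_add, ← hn (n + 1 + (n + 1)) (by omega), hn (n + 1) (by omega)]
      exact Submodule.smul_mem_pointwise_smul w _ W hw
    obtain ⟨w', hw', he⟩ := hx
    refine Submodule.mem_sup.2 ⟨w', hw', w - w', ⟨sub_mem hw (hle _ hw'), ?_⟩,
      add_sub_cancel w' w⟩
    exact LinearMap.mem_ker.2 ((smul_sub _ w w').trans (sub_eq_zero.2 he.symm))
  rcases hW.2 hfit with h | h
  · refine Or.inl (le_antisymm (hle x) ?_)
    calc W = x • x ^ n • W := by rw [smul_smul, ← pow_succ', h]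
      _ ≤ x • W := Submodule.map_mono (hle _)
  · exact Or.inr ⟨n + 1, Submodule.mem_annihilator.2 fun w hw => (inf_eq_left.1 h) hw⟩

lemma isPrime_radical_annihilator_of_supIrred [IsArtinian R M] {W : Submodule R M}
    (hW : SupIrred W) : W.annihilator.radical.IsPrime := by
  have hstab {z : R} (hz : z • W = W) : z ∉ W.annihilator.radical := by
    rintro ⟨n, hn⟩
    have hzn (n : ℕ) : z ^ n • W = W := by
      induction n with
      | zero => rw [pow_zero, one_smul]
      | succ n ih => rw [pow_succ, mul_smul, hz, ih]
    refine hW.1 (isMin_iff_eq_bot.2 (eq_bot_iff.2 fun w hw => ?_))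
    rw [← hzn n] at hw
    obtain ⟨w, hw, rfl⟩ := hw
    exact Submodule.mem_annihilator.1 hn w hw
  refine ⟨fun h => hstab (one_smul R W) (h ▸ Submodule.mem_top), fun {x y} hxy => ?_⟩
  by_contra! hcon
  have hx := (smul_eq_or_mem_radical_annihilator_of_supIrred hW x).resolve_right hcon.1
  have hy := (smul_eq_or_mem_radical_annihilator_of_supIrred hW y).resolve_right hcon.2
  exact hstab (by rw [mul_smul, hy, hx]) hxy

lemma exists_mem_forall_notMem_radical_annihilator [IsArtinian R M] (b : Ideal R)
    {t : Finset (Submodule R M)} (ht : ∀ W ∈ t, SupIrred W) :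
    ∃ u ∈ b, ∀ W ∈ t, ¬ b ≤ W.annihilator.radical → u ∉ W.annihilator.radical := by
  classical
  by_contra! hcon
  have hsub : (b : Set R) ⊆ ⋃ W ∈ ((t.filter fun W => ¬ b ≤ W.annihilator.radical :
      Finset (Submodule R M)) : Set (Submodule R M)), (W.annihilator.radical : Set R) := by
    intro u hu
    obtain ⟨W, hW, hbW, huW⟩ := hcon u hu
    exact Set.mem_biUnion (Finset.mem_coe.2 (Finset.mem_filter.2 ⟨hW, hbW⟩)) huW
  obtain ⟨W, hW, hbW⟩ := (Ideal.subset_union_prime (R := R)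
    (f := fun W : Submodule R M => W.annihilator.radical) ⊥ ⊥ fun W hW _ _ =>
      isPrime_radical_annihilator_of_supIrred (ht W (Finset.mem_filter.1 hW).1)).1 hsub
  exact (Finset.mem_filter.1 hW).2 hbW

lemma exists_surjective_lsmul_quotient_torsionByIdeal [IsArtinian R M] (hb : b.FG) :
    ∃ u ∈ b, ∃ k : ℕ,
      Function.Surjective (LinearMap.lsmul R (M ⧸ torsionByIdeal (b ^ k) M) u) := by
  obtain ⟨t, ht, hirr⟩ := exists_supIrred_decomposition (⊤ : Submodule R M)
  obtain ⟨u, hu, hut⟩ := exists_mem_forall_notMem_radical_annihilator b fun W hW => hirr hW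
  have hpow (W : Submodule R M) : ∃ k, b ≤ W.annihilator.radical → b ^ k ≤ W.annihilator := by
    by_cases h : b ≤ W.annihilator.radical
    · exact (Ideal.exists_pow_le_of_le_radical_of_fg h hb).imp fun _ hk _ => hk
    · exact ⟨0, fun h' => absurd h' h⟩
  choose k hk using hpow
  refine ⟨u, hu, t.sup k, LinearMap.range_eq_top.1 ?_⟩
  set K := torsionByIdeal (b ^ t.sup k) M
  set L := LinearMap.range (LinearMap.lsmul R (M ⧸ K) u)
  suffices h : (⊤ : Submodule R M) ≤ L.comap K.mkQ by
    refine eq_top_iff.2 fun q _ => ?_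
    obtain ⟨m, rfl⟩ := K.mkQ_surjective q
    exact h trivial
  rw [← ht]
  refine Finset.sup_le fun W hW w hw => ?_
  by_cases h : b ≤ W.annihilator.radical
  · have hwK : w ∈ K := mem_torsionByIdeal.2 fun a ha =>
      Submodule.mem_annihilator.1 (hk W h (Ideal.pow_le_pow_right (Finset.le_sup hW) ha)) w hw
    rw [Submodule.mem_comap, Submodule.mkQ_apply, (Submodule.Quotient.mk_eq_zero K).2 hwK]
    exact zero_mem L
  · rw [id, ← (smul_eq_or_mem_radical_annihilator_of_supIrred (hirr hW) u).resolve_right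
      (hut W hW h)] at hw
    obtain ⟨w', -, rfl⟩ := hw
    exact ⟨K.mkQ w', rfl⟩

end Artinian

/-! ### Dévissage by divisibility -/

section DivisibilityDevissage

variable {R : Type u} [CommRing R] {S : SerreClass R} {b : Ideal R} {i : ℕ}
  {M : Type u} [AddCommGroup M] [Module R M]

lemma annihilator_lt_annihilator_ker_lsmul {u : R} (hu : u ∉ Module.annihilator R M) :
    Module.annihilator R M < Module.annihilator R (LinearMap.ker (LinearMap.lsmul R M u)) := by
  refine lt_of_le_of_ne (LinearMap.annihilator_le_of_injective _
    (LinearMap.ker _).injective_subtype) fun h => hu ?_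
  rw [h]
  exact Module.mem_annihilator.2 fun x => Subtype.ext x.2

namespace SerreClass

lemma of_exact_of_comp_eq_zero {U V W X Y : Type u}
    [AddCommGroup U] [Module R U] [AddCommGroup V] [Module R V]
    [AddCommGroup W] [Module R W] [AddCommGroup X] [Module R X] [AddCommGroup Y] [Module R Y]
    {f : U →ₗ[R] V} {g : V →ₗ[R] W} {k : X →ₗ[R] W} {l : W →ₗ[R] Y}
    (hfg : Function.Exact f g) (hkl : Function.Exact k l) (hlg : ∀ v, l (g v) = 0)
    (hU : S.mem U) (hX : S.mem X) : S.mem V := by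
  refine S.of_exact f (g.codRestrict (LinearMap.range k) fun v => (hkl _).1 (hlg v))
    (fun v => ?_) hU (S.of_surjective k.rangeRestrict k.surjective_rangeRestrict hX)
  rw [← hfg v]
  exact ⟨fun h => congrArg Subtype.val h, fun h => Subtype.ext h⟩

lemma ext_succ_mem_of_lsmul {u : R} (hu : u ∈ b)
    (hK : S.mem (ModExt R (R ⧸ b) (LinearMap.ker (LinearMap.lsmul R M u)) (i + 1)))
    (hC : S.mem (ModExt R (R ⧸ b) (M ⧸ LinearMap.range (LinearMap.lsmul R M u)) i)) :
    S.mem (ModExt R (R ⧸ b) M (i + 1)) := by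
  have hKM := IsSES.of_rangeRestrict (LinearMap.lsmul R M u)
  have hMC := IsSES.of_submodule (LinearMap.range (LinearMap.lsmul R M u))
  have hfactor : (LinearMap.range (LinearMap.lsmul R M u)).subtype ∘ₗ
      (LinearMap.lsmul R M u).rangeRestrict = LinearMap.lsmul R M u := rfl
  refine of_exact_of_comp_eq_zero (ModExt.exact_map_map hKM (R ⧸ b) (i + 1))
    (ModExt.exact_mapδ_map hMC (R ⧸ b) i) (fun v => ?_) hK hC
  rw [ModExt.map_map, hfactor, ModExt.map_lsmul]
  exact Module.mem_annihilator.1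
    (ModExt.annihilator_le_left (R ⧸ b) M (i + 1) (Ideal.annihilator_quotient.ge hu)) v

variable [IsNoetherianRing R]

lemma ext_torsionByIdeal_pow_mem (h : S.mem (ModExt R (R ⧸ b) M 0)) (k i : ℕ) :
    S.mem (ModExt R (R ⧸ b) (torsionByIdeal (b ^ k) M) i) :=
  ext_mem (torsionByIdeal_pow_mem b ((ext_quotient_zero_mem_iff b).1 h) k) i

lemma ext_mem_of_hom_mem
    (hdiv : ∀ (M : Type u) [AddCommGroup M] [Module R M], IsTorsionIdeal b M →
      S.mem (torsionByIdeal b M) → ∃ u ∈ b, ∃ k : ℕ,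
        Function.Surjective (LinearMap.lsmul R (M ⧸ torsionByIdeal (b ^ k) M) u))
    (hM : IsTorsionIdeal b M) (h₀ : S.mem (ModExt R (R ⧸ b) M 0)) (i : ℕ) :
    S.mem (ModExt R (R ⧸ b) M i) := by
  induction hc : Module.annihilator R M using WellFoundedGT.induction generalizing M i with
  | ind c ih =>
  subst hc
  obtain ⟨u, hu, k, hsurj⟩ := hdiv M hM ((ext_quotient_zero_mem_iff b).1 h₀)
  set Q := M ⧸ torsionByIdeal (b ^ k) M
  set L := LinearMap.lsmul R Q u
  have hMQ := IsSES.of_submodule (torsionByIdeal (b ^ k) M)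
  have hQ := IsTorsionIdeal.of_surjective hM _ hMQ.surjective
  have hQ₀ : S.mem (ModExt R (R ⧸ b) Q 0) :=
    ext_right_mem₃ hMQ h₀ (ext_torsionByIdeal_pow_mem h₀ k 1)
  have hK (i : ℕ) : S.mem (ModExt R (R ⧸ b) (LinearMap.ker L) i) := by
    by_cases huQ : u ∈ Module.annihilator R Q
    · have : Subsingleton Q := subsingleton_of_forall_eq 0 fun q => by
        obtain ⟨q, rfl⟩ := hsurj q
        exact Module.mem_annihilator.1 huQ q
      exact ext_mem S.of_subsingleton i
    · have hinj := (LinearMap.ker L).injective_subtype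
      exact ih _ ((LinearMap.annihilator_le_of_surjective _ hMQ.surjective).trans_lt
        (annihilator_lt_annihilator_ker_lsmul huQ)) (IsTorsionIdeal.of_injective hQ _ hinj)
        (ext_zero_mem_of_injective hinj hQ₀) i rfl
  have hC : Subsingleton (Q ⧸ LinearMap.range L) :=
    Submodule.Quotient.subsingleton_iff.2 (LinearMap.range_eq_top.2 hsurj)
  refine ext_right_mem₂ hMQ (ext_torsionByIdeal_pow_mem h₀ k i) ?_
  cases i with
  | zero => exact hQ₀
  | succ i => exact ext_succ_mem_of_lsmul hu (hK _) (ext_mem S.of_subsingleton i)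

lemma ext_mem_of_ext_one_mem (T : Submonoid R)
    (hdiv : ∀ (M : Type u) [AddCommGroup M] [Module R M], IsTorsionIdeal b M →
      S.mem (torsionByIdeal b M) → ∃ u ∈ b, ∃ k : ℕ, ∀ q : M ⧸ torsionByIdeal (b ^ k) M,
        ∃ t ∈ T, ∃ q', t • q = u • q')
    (htors : ∀ (Z : Type u) [AddCommGroup Z] [Module R Z], IsTorsionIdeal b Z →
      (∀ z : Z, ∃ t ∈ T, t • z = 0) → S.mem (torsionByIdeal b Z) →
      ∀ i, S.mem (ModExt R (R ⧸ b) Z i))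
    (hM : IsTorsionIdeal b M) (h₀ : S.mem (ModExt R (R ⧸ b) M 0))
    (h₁ : S.mem (ModExt R (R ⧸ b) M 1)) (i : ℕ) : S.mem (ModExt R (R ⧸ b) M i) := by
  induction hc : Module.annihilator R M using WellFoundedGT.induction generalizing M i with
  | ind c ih =>
  subst hc
  obtain ⟨u, hu, k, hdivQ⟩ := hdiv M hM ((ext_quotient_zero_mem_iff b).1 h₀)
  set Q := M ⧸ torsionByIdeal (b ^ k) M
  set L := LinearMap.lsmul R Q u
  have hMQ := IsSES.of_submodule (torsionByIdeal (b ^ k) M)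
  have hQ := IsTorsionIdeal.of_surjective hM _ hMQ.surjective
  have hQ₀ : S.mem (ModExt R (R ⧸ b) Q 0) :=
    ext_right_mem₃ hMQ h₀ (ext_torsionByIdeal_pow_mem h₀ k 1)
  have hQ₁ : S.mem (ModExt R (R ⧸ b) Q 1) :=
    ext_right_mem₃ hMQ h₁ (ext_torsionByIdeal_pow_mem h₀ k 2)
  refine ext_right_mem₂ hMQ (ext_torsionByIdeal_pow_mem h₀ k i) ?_
  by_cases huQ : u ∈ Module.annihilator R Q
  · refine htors Q hQ (fun z => ?_) ((ext_quotient_zero_mem_iff b).1 hQ₀) i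
    obtain ⟨t, ht, q', hq'⟩ := hdivQ z
    exact ⟨t, ht, hq'.trans (Module.mem_annihilator.1 huQ q')⟩
  have hKL := IsSES.of_rangeRestrict L
  have hLQ := IsSES.of_submodule (LinearMap.range L)
  have hL₀ := ext_zero_mem_of_injective hLQ.injective hQ₀
  have hK := ih _ ((LinearMap.annihilator_le_of_surjective _ hMQ.surjective).trans_lt
    (annihilator_lt_annihilator_ker_lsmul huQ)) (IsTorsionIdeal.of_injective hQ _ hKL.injective)
    (ext_zero_mem_of_injective hKL.injective hQ₀) (ext_right_mem₁ hKL hL₀ hQ₁)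
  have hC := htors _ (IsTorsionIdeal.of_surjective hQ _ hLQ.surjective) (fun z => by
    obtain ⟨q, rfl⟩ := hLQ.surjective z
    obtain ⟨t, ht, q', hq'⟩ := hdivQ q
    refine ⟨t, ht, ?_⟩
    rw [← map_smul, hq']
    exact (Submodule.Quotient.mk_eq_zero _).2 ⟨q', rfl⟩)
    ((ext_quotient_zero_mem_iff b).1
      (ext_right_mem₃ hLQ hQ₀ (ext_right_mem₃ hKL hQ₁ (hK 2 rfl))))
  cases i with
  | zero => exact hQ₀
  | succ i => exact ext_succ_mem_of_lsmul hu (hK _ rfl) (hC i)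

end SerreClass

end DivisibilityDevissage

/-! ### Generically finitely generated modules -/

section SerreClasses

variable {R : Type u} [CommRing R]

/-- The Serre class of Noetherian modules. -/
def SerreClass.noetherian (R : Type u) [CommRing R] : SerreClass R where
  mem V _ _ := IsNoetherian R V
  zero := inferInstance
  of_exact f g h _ _ := isNoetherian_of_range_eq_ker f g (LinearMap.exact_iff.1 h).symm

/-- The Serre class of modules of finite length. -/
def SerreClass.finiteLength (R : Type u) [CommRing R] : SerreClass R where
  mem V _ _ := IsNoetherian R V ∧ IsArtinian R V
  zero := ⟨inferInstance, inferInstance⟩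
  of_exact f g h hU hW :=
    ⟨have := hU.1; have := hW.1; isNoetherian_of_range_eq_ker f g (LinearMap.exact_iff.1 h).symm,
      have := hU.2; have := hW.2; isArtinian_of_range_eq_ker f g (LinearMap.exact_iff.1 h).symm⟩

/-- The Serre class of modules all of whose elements are killed by a power of `s`. -/
def SerreClass.powTorsion (s : R) : SerreClass R where
  mem V _ _ := ∀ v : V, ∃ k : ℕ, s ^ k • v = 0
  zero := fun v => ⟨0, Subsingleton.elim _ _⟩
  of_exact f g h hU hW v := by
    obtain ⟨k, hk⟩ := hW (g v)
    rw [← map_smul] at hk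
    obtain ⟨w, hw⟩ := (h _).1 hk
    obtain ⟨l, hl⟩ := hU w
    exact ⟨l + k, by rw [pow_add, mul_smul, ← hw, ← map_smul, hl, map_zero]⟩

lemma exists_fg_map_eq {V W : Type u} [AddCommGroup V] [Module R V] [AddCommGroup W] [Module R W]
    (g : V →ₗ[R] W) {L : Submodule R W} (hL : L.FG) (h : L ≤ LinearMap.range g) :
    ∃ P : Submodule R V, P.FG ∧ P.map g = L := by
  classical
  obtain ⟨G, rfl⟩ := hL
  have hG : (G : Set W) ⊆ g '' Set.univ := fun x hx => by
    simpa using h (Submodule.subset_span hx)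
  obtain ⟨G', -, rfl⟩ := Finset.subset_set_image_iff.1 hG
  exact ⟨Submodule.span R G', Submodule.fg_span G'.finite_toSet, by
    rw [Submodule.map_span, Finset.coe_image]⟩

/-- The Serre class of modules which are finitely generated up to `s`-power torsion, for some
`s ∈ T`. -/
def SerreClass.genericallyFG [IsNoetherianRing R] (T : Submonoid R) : SerreClass R where
  mem V _ _ := ∃ s ∈ T, ∃ L : Submodule R V, L.FG ∧ ∀ v : V, ∃ k : ℕ, s ^ k • v ∈ L
  zero := ⟨1, T.one_mem, ⊥, Submodule.fg_bot, fun v => ⟨0, Subsingleton.elim _ _⟩⟩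
  of_exact {U V W} _ _ _ _ _ _ f g h hU hW := by
    obtain ⟨s, hs, L, hL, hsL⟩ := hU
    obtain ⟨t, ht, L', hL', htL'⟩ := hW
    have : Module.Finite R L' := Module.Finite.iff_fg.2 hL'
    have hfg : (L' ⊓ LinearMap.range g).FG :=
      isNoetherian_submodule.1 (isNoetherian_of_isNoetherianRing_of_finite R L') _ inf_le_left
    obtain ⟨P, hP, hPg⟩ := exists_fg_map_eq g hfg inf_le_right
    refine ⟨s * t, T.mul_mem hs ht, P ⊔ L.map f, hP.sup (hL.map f), fun v => ?_⟩
    obtain ⟨k, hk⟩ := htL' (g v)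
    have hk' : g (t ^ k • v) ∈ P.map g := by
      rw [hPg, map_smul]
      exact ⟨hk, ⟨t ^ k • v, map_smul _ _ _⟩⟩
    obtain ⟨p, hp, hpv⟩ := hk'
    obtain ⟨w, hw⟩ := (h (t ^ k • v - p)).1 (by rw [map_sub, hpv, sub_self])
    obtain ⟨l, hl⟩ := hsL w
    refine ⟨k + l, ?_⟩
    have hv : (s * t) ^ (k + l) • v =
        (s ^ (k + l) * t ^ l) • p + (s ^ k * t ^ l) • f (s ^ l • w) := by
      rw [map_smul, hw]
      module
    rw [hv]
    exact add_mem (Submodule.mem_sup_left (P.smul_mem _ hp))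
      (Submodule.smul_mem _ _ (Submodule.mem_sup_right ⟨_, hl, rfl⟩))

lemma SerreClass.genericallyFG_mem_of_isNoetherian [IsNoetherianRing R] {T : Submonoid R}
    {M : Type u} [AddCommGroup M] [Module R M] [IsNoetherian R M] :
    (genericallyFG T).mem M :=
  ⟨1, T.one_mem, ⊤, IsNoetherian.noetherian _, fun _ => ⟨0, trivial⟩⟩

end SerreClasses

section GenericDivisibility

variable {R : Type u} [CommRing R] {b : Ideal R} {M : Type u} [AddCommGroup M] [Module R M]

lemma isArtinian_of_le_annihilator [IsArtinianRing (R ⧸ b)] [Module.Finite R M]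
    (hM : b ≤ Module.annihilator R M) : IsArtinian R M := by
  obtain ⟨n, p, hp⟩ := exists_surjective_pi_quotient hM
  have : IsArtinian R (Fin n → R ⧸ b) :=
    isArtinian_of_surjective_algebraMap (R := R ⧸ b) (S := R) Ideal.Quotient.mk_surjective
  exact isArtinian_of_surjective _ p hp

lemma le_annihilator_torsionByIdeal : b ≤ Module.annihilator R (torsionByIdeal b M) :=
  fun a ha => Module.mem_annihilator.2 fun x => Subtype.ext (mem_torsionByIdeal.1 x.2 a ha)

lemma smul_eq_zero_of_mem_map {A X : Type*} [CommRing A] [Algebra R A] [AddCommGroup X]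
    [Module R X] [Module A X] [IsScalarTower R A X] {x : X} (hx : ∀ r ∈ b, r • x = 0) {a : A}
    (ha : a ∈ b.map (algebraMap R A)) : a • x = 0 := by
  suffices b.map (algebraMap R A) ≤ LinearMap.ker (LinearMap.toSpanSingleton A X x) from this ha
  rw [Ideal.map_le_iff_le_comap]
  exact fun r hr => (algebraMap_smul A r x).trans (hx r hr)

variable {T : Submonoid R}

lemma exists_smul_mem_torsionByIdeal_of_forall_mk_eq_zero (hb : b.FG) {x : M}
    (h : ∀ a ∈ b, LocalizedModule.mk (a • x) (1 : T) = 0) :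
    ∃ t ∈ T, t • x ∈ torsionByIdeal b M := by
  induction b, hb using Submodule.fg_induction with
  | singleton a =>
    obtain ⟨t, ht⟩ := (IsLocalizedModule.eq_zero_iff T (LocalizedModule.mkLinearMap T M)).1
      (h a (Submodule.mem_span_singleton_self a))
    refine ⟨t, t.2, mem_torsionByIdeal.2 fun c hc => ?_⟩
    obtain ⟨r, rfl⟩ := Submodule.mem_span_singleton.1 hc
    rw [smul_assoc, smul_comm a, ← Submonoid.smul_def, ht, smul_zero]
  | sup b₁ b₂ _ _ ih₁ ih₂ =>
    obtain ⟨t₁, ht₁, hx₁⟩ := ih₁ fun a ha => h a (Submodule.mem_sup_left ha)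
    obtain ⟨t₂, ht₂, hx₂⟩ := ih₂ fun a ha => h a (Submodule.mem_sup_right ha)
    refine ⟨t₁ * t₂, T.mul_mem ht₁ ht₂, mem_torsionByIdeal.2 fun a ha => ?_⟩
    obtain ⟨a₁, ha₁, a₂, ha₂, rfl⟩ := Submodule.mem_sup.1 ha
    rw [add_smul, mul_smul, smul_comm a₂, mem_torsionByIdeal.1 hx₂ a₂ ha₂, smul_comm t₁,
      smul_comm a₁, mem_torsionByIdeal.1 hx₁ a₁ ha₁, smul_zero, smul_zero, add_zero]

lemma smul_mk_eq_mk_one (m : M) (t : T) :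
    (t : R) • LocalizedModule.mk m t = LocalizedModule.mk m 1 := by
  rw [LocalizedModule.smul'_mk, ← Submonoid.smul_def, LocalizedModule.mk_cancel]

lemma isTorsionIdeal_localizedModule (hM : IsTorsionIdeal b M) :
    IsTorsionIdeal (b.map (algebraMap R (Localization T))) (LocalizedModule T M) := by
  intro x
  induction x using LocalizedModule.induction_on with
  | h m t =>
  obtain ⟨n, hn⟩ := hM m
  refine ⟨n, fun a ha => ?_⟩
  rw [← Ideal.map_pow] at ha
  refine smul_eq_zero_of_mem_map (fun r hr => ?_) ha
  rw [LocalizedModule.smul'_mk, hn r hr, LocalizedModule.zero_mk]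

lemma map_le_annihilator_localizedModule (hM : b ≤ Module.annihilator R M) :
    b.map (algebraMap R (Localization T)) ≤
      Module.annihilator (Localization T) (LocalizedModule T M) := by
  refine fun a ha => Module.mem_annihilator.2 fun x => smul_eq_zero_of_mem_map (fun r hr => ?_) ha
  induction x using LocalizedModule.induction_on with
  | h m t =>
    rw [LocalizedModule.smul'_mk, Module.mem_annihilator.1 (hM hr), LocalizedModule.zero_mk]

lemma torsionByIdeal_localizedModule_le_range (hb : b.FG) :
    torsionByIdeal (b.map (algebraMap R (Localization T))) (LocalizedModule T M) ≤
      LinearMap.range (LocalizedModule.map T (torsionByIdeal b M).subtype) := by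
  intro x hx
  induction x using LocalizedModule.induction_on with
  | h m t =>
  obtain ⟨t', ht', hm⟩ := exists_smul_mem_torsionByIdeal_of_forall_mk_eq_zero hb
    (T := T) (x := m) fun a ha => by
      rw [← LocalizedModule.smul'_mk, ← smul_mk_eq_mk_one m t, smul_comm,
        ← algebraMap_smul (Localization T) a,
        mem_torsionByIdeal.1 hx _ (Ideal.mem_map_of_mem _ ha), smul_zero]
  refine ⟨LocalizedModule.mk ⟨t' • m, hm⟩ (t * ⟨t', ht'⟩), ?_⟩
  rw [LocalizedModule.map_mk]
  exact LocalizedModule.mk_cancel_common_right t ⟨t', ht'⟩ m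

variable [IsNoetherianRing R]

lemma finite_localizedModule_of_genericallyFG (h : (SerreClass.genericallyFG T).mem M) :
    Module.Finite (Localization T) (LocalizedModule T M) := by
  obtain ⟨s, hs, L, hL, hsL⟩ := h
  have : Module.Finite R L := Module.Finite.iff_fg.2 hL
  have := Module.Finite.of_isLocalizedModule T (Rₚ := Localization T)
    (LocalizedModule.mkLinearMap T L)
  refine Module.Finite.of_surjective (LocalizedModule.map T L.subtype) fun x => ?_
  induction x using LocalizedModule.induction_on with
  | h m t =>
  obtain ⟨k, hk⟩ := hsL m
  refine ⟨LocalizedModule.mk ⟨s ^ k • m, hk⟩ (t * ⟨s, hs⟩ ^ k), ?_⟩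
  rw [LocalizedModule.map_mk]
  exact LocalizedModule.mk_cancel_common_right t (⟨s, hs⟩ ^ k) m

lemma isArtinianRing_quotient_localization
    (hT : ∀ P : Ideal R, P.IsPrime → b ≤ P → Disjoint (T : Set R) P → P ∈ b.minimalPrimes) :
    IsArtinianRing (Localization T ⧸ b.map (algebraMap R (Localization T))) := by
  rw [isArtinianRing_iff_isNoetherianRing_krullDimLE_zero]
  have := IsLocalization.isNoetherianRing T (Localization T) inferInstance
  refine ⟨inferInstance, Ring.KrullDimLE.mk₀ fun P hP => ?_⟩
  obtain ⟨Q, hQ, hPQ⟩ := Ideal.exists_le_maximal P hP.ne_top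
  suffices P = Q by rwa [this]
  refine le_antisymm hPQ ?_
  have hQp := hQ.isPrime
  let π := Ideal.Quotient.mk (b.map (algebraMap R (Localization T)))
  have hπ : Function.Surjective π := Ideal.Quotient.mk_surjective
  have under_mem (I : Ideal (Localization T ⧸ b.map (algebraMap R (Localization T))))
      (hI : I.IsPrime) : (I.comap π).under R ∈ b.minimalPrimes := by
    have hI' := (IsLocalization.isPrime_iff_isPrime_disjoint T (Localization T) (I.comap π)).1
      (Ideal.comap_isPrime π I)
    refine hT _ hI'.1 ?_ hI'.2
    rw [Ideal.under_def, ← Ideal.map_le_iff_le_comap]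
    intro x hx
    rw [Ideal.mem_comap, Ideal.Quotient.eq_zero_iff_mem.2 hx]
    exact zero_mem _
  have hle : (Q.comap π).under R ≤ (P.comap π).under R :=
    (under_mem Q hQp).2 ⟨(under_mem P hP).1.1, (under_mem P hP).1.2⟩
      (Ideal.comap_mono (Ideal.comap_mono hPQ))
  rw [← Ideal.comap_le_comap_iff_of_surjective π hπ,
    ← IsLocalization.map_under T (Localization T) (Q.comap π),
    ← IsLocalization.map_under T (Localization T) (P.comap π)]
  exact Ideal.map_mono hle

lemma isArtinian_torsionByIdeal_localizedModule
    (hT : ∀ P : Ideal R, P.IsPrime → b ≤ P → Disjoint (T : Set R) P → P ∈ b.minimalPrimes)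
    (h : (SerreClass.genericallyFG T).mem (torsionByIdeal b M)) :
    IsArtinian (Localization T)
      (torsionByIdeal (b.map (algebraMap R (Localization T))) (LocalizedModule T M)) := by
  have := isArtinianRing_quotient_localization hT
  have := finite_localizedModule_of_genericallyFG h
  have := isArtinian_of_le_annihilator (map_le_annihilator_localizedModule (T := T)
    (le_annihilator_torsionByIdeal (b := b) (M := M)))
  exact isArtinian_of_le (torsionByIdeal_localizedModule_le_range (IsNoetherian.noetherian b))

lemma exists_surjective_lsmul_quotient_localizedModule
    (hT : ∀ P : Ideal R, P.IsPrime → b ≤ P → Disjoint (T : Set R) P → P ∈ b.minimalPrimes)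
    (hM : IsTorsionIdeal b M) (h : (SerreClass.genericallyFG T).mem (torsionByIdeal b M)) :
    ∃ u ∈ b, ∃ k : ℕ, ∀ x : LocalizedModule T M, ∃ y : LocalizedModule T M,
      x - u • y ∈ torsionByIdeal ((b ^ k).map (algebraMap R (Localization T)))
        (LocalizedModule T M) := by
  have hb' : (b.map (algebraMap R (Localization T))).FG :=
    Ideal.FG.map (IsNoetherian.noetherian b) _
  have := isArtinian_of_torsionByIdeal hb' (isTorsionIdeal_localizedModule hM)
    (isArtinian_torsionByIdeal_localizedModule hT h)
  obtain ⟨u', hu', k, hk⟩ :=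
    exists_surjective_lsmul_quotient_torsionByIdeal (M := LocalizedModule T M) hb'
  obtain ⟨⟨⟨u, hu⟩, t⟩, hut⟩ := (IsLocalization.mem_map_algebraMap_iff T (Localization T)).1 hu'
  refine ⟨u, hu, k, fun x => ?_⟩
  obtain ⟨q, hq⟩ := hk (Submodule.Quotient.mk x)
  obtain ⟨y, rfl⟩ := Submodule.Quotient.mk_surjective _ q
  refine ⟨Localization.mk 1 t • y, ?_⟩
  have hy : u • Localization.mk 1 t • y = u' • y := by
    rw [← algebraMap_smul (Localization T) u, ← hut, smul_smul, mul_assoc,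
      ← Localization.mk_one_eq_algebraMap, Localization.mk_mul, mul_one, one_mul,
      Localization.mk_self, mul_one]
  rw [hy, Ideal.map_pow]
  exact (Submodule.Quotient.eq _).1 hq.symm

lemma exists_smul_eq_smul_quotient_torsionByIdeal
    (hT : ∀ P : Ideal R, P.IsPrime → b ≤ P → Disjoint (T : Set R) P → P ∈ b.minimalPrimes)
    (hM : IsTorsionIdeal b M) (h : (SerreClass.genericallyFG T).mem (torsionByIdeal b M)) :
    ∃ u ∈ b, ∃ k : ℕ, ∀ q : M ⧸ torsionByIdeal (b ^ k) M, ∃ t ∈ T, ∃ q', t • q = u • q' := by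
  obtain ⟨u, hu, k, hk⟩ := exists_surjective_lsmul_quotient_localizedModule hT hM h
  refine ⟨u, hu, k, fun q => ?_⟩
  obtain ⟨m, rfl⟩ := Submodule.Quotient.mk_surjective _ q
  obtain ⟨y, hy⟩ := hk (LocalizedModule.mk m 1)
  induction y using LocalizedModule.induction_on with
  | h m' t =>
  obtain ⟨t', ht', hm⟩ := exists_smul_mem_torsionByIdeal_of_forall_mk_eq_zero (T := T)
    (x := (t : R) • m - u • m') (IsNoetherian.noetherian (b ^ k)) fun a ha => by
      have hcl : LocalizedModule.mk ((t : R) • m - u • m') (1 : T) =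
          (t : R) • (LocalizedModule.mk m (1 : T) - u • LocalizedModule.mk m' t) := by
        rw [smul_sub, smul_comm (t : R) u, smul_mk_eq_mk_one]
        simpa using map_sub (LocalizedModule.mkLinearMap T M) ((t : R) • m) (u • m')
      rw [← LocalizedModule.smul'_mk, hcl, smul_comm, ← algebraMap_smul (Localization T) a,
        mem_torsionByIdeal.1 hy _ (Ideal.mem_map_of_mem _ ha), smul_zero]
  refine ⟨t' * t, T.mul_mem ht' t.2, Submodule.Quotient.mk (t' • m'), ?_⟩
  rw [← Submodule.Quotient.mk_smul, ← Submodule.Quotient.mk_smul, Submodule.Quotient.eq,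
    mul_smul, smul_comm u, ← smul_sub]
  exact hm

end GenericDivisibility

/-! ### Avoiding primes of large coheight; dimension at most one -/

section GenericExt

variable {R : Type u} [CommRing R]

lemma ringKrullDim_quotient_le_iff {I : Ideal R} {n : ℕ} :
    ringKrullDim (R ⧸ I) ≤ n ↔
      ∀ l : LTSeries (PrimeSpectrum R), I ≤ l.head.asIdeal → l.length ≤ n := by
  rw [ringKrullDim_quotient]
  constructor
  · intro h l hl
    let l' : LTSeries (PrimeSpectrum.zeroLocus (R := R) I) :=
      { length := l.length
        toFun := fun i => ⟨l i, fun x hx => l.head_le i (hl hx)⟩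
        step := fun i => l.step i }
    have := (Order.LTSeries.length_le_krullDim l').trans h
    exact_mod_cast this
  · intro h
    refine iSup_le fun l => ?_
    have := h (l.map Subtype.val fun a b hab => hab) (fun x hx => l.head.2 hx)
    exact_mod_cast this

lemma ringKrullDim_quotient_anti {I J : Ideal R} (h : I ≤ J) :
    ringKrullDim (R ⧸ J) ≤ ringKrullDim (R ⧸ I) :=
  ringKrullDim_le_of_surjective (Ideal.Quotient.factor h) (Ideal.Quotient.factor_surjective h)

lemma exists_mem_annihilator_of_forall_exists_smul_eq_zero {T : Submonoid R} {L : Type u}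
    [AddCommGroup L] [Module R L] [Module.Finite R L] (h : ∀ x : L, ∃ t ∈ T, t • x = 0) :
    ∃ t ∈ T, t ∈ Module.annihilator R L := by
  classical
  obtain ⟨G, hG⟩ := Module.finite_def.1 (inferInstance : Module.Finite R L)
  choose t ht htx using h
  refine ⟨∏ g ∈ G, t g, T.prod_mem fun g _ => ht g, ?_⟩
  rw [← Submodule.annihilator_top, ← hG, Submodule.mem_annihilator_span]
  intro g
  rw [← Finset.prod_erase_mul _ _ g.2, mul_smul, htx, smul_zero]

/-- The elements lying outside all minimal primes `p` of `b` with `dim R/p > e`. -/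
def avoiding (e : ℕ) (b : Ideal R) : Submonoid R where
  carrier := {z | ∀ p ∈ b.minimalPrimes, z ∈ p → ringKrullDim (R ⧸ p) ≤ e}
  one_mem' _ hp h := absurd ((Ideal.eq_top_iff_one _).2 h) hp.1.1.ne_top
  mul_mem' hx hy p hp h := (hp.1.1.mem_or_mem h).elim (hx p hp) (hy p hp)

lemma mem_avoiding {e : ℕ} {b : Ideal R} {z : R} :
    z ∈ avoiding e b ↔ ∀ p ∈ b.minimalPrimes, z ∈ p → ringKrullDim (R ⧸ p) ≤ e := Iff.rfl

lemma ringKrullDim_quotient_sup_le {e : ℕ} {b : Ideal R} (hb : ringKrullDim (R ⧸ b) ≤ (e + 1 : ℕ))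
    {z : R} (hz : z ∈ avoiding e b) : ringKrullDim (R ⧸ (b ⊔ Ideal.span {z})) ≤ e := by
  rw [ringKrullDim_quotient_le_iff] at hb ⊢
  intro l hl
  obtain ⟨p, hp, hpl⟩ := Ideal.exists_minimalPrimes_le (le_sup_left.trans hl)
  by_cases hzp : z ∈ p
  · exact ringKrullDim_quotient_le_iff.1 (hz p hp hzp) l hpl
  · have hlt : (⟨p, hp.1.1⟩ : PrimeSpectrum R) < l.head :=
      lt_of_le_of_ne hpl fun h => hzp (by
        have : p = l.head.asIdeal := congrArg PrimeSpectrum.asIdeal h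
        rw [this]
        exact hl (Ideal.mem_sup_right (Ideal.mem_span_singleton_self z)))
    have := hb (l.cons _ hlt) (by rw [RelSeries.head_cons]; exact hp.1.2)
    simpa using this

variable [IsNoetherianRing R]

lemma exists_mem_avoiding {e : ℕ} {b P : Ideal R}
    (h : ∀ p ∈ b.minimalPrimes, P ≤ p → ringKrullDim (R ⧸ p) ≤ e) :
    ∃ z ∈ P, z ∈ avoiding e b := by
  by_contra! hcon
  have hfin : {p ∈ b.minimalPrimes | ¬ ringKrullDim (R ⧸ p) ≤ e}.Finite :=
    (Ideal.finite_minimalPrimes_of_isNoetherianRing R b).subset fun p hp => hp.1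
  have hsub : (P : Set R) ⊆ ⋃ p ∈ (hfin.toFinset : Set (Ideal R)), (p : Set R) := by
    intro z hz
    have := hcon z hz
    rw [mem_avoiding] at this
    push Not at this
    obtain ⟨p, hp, hzp, hd⟩ := this
    exact Set.mem_biUnion (by simpa using ⟨hp, hd⟩) hzp
  obtain ⟨p, hp, hPp⟩ := (Ideal.subset_union_prime (f := fun p : Ideal R => p) ⊥ ⊥
    (fun p hp _ _ => ((hfin.mem_toFinset).1 hp).1.1.1)).1 hsub
  have := (hfin.mem_toFinset).1 hp
  exact this.2 (h p this.1 hPp)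

lemma mem_minimalPrimes_of_disjoint_avoiding {e : ℕ} {b P : Ideal R} (hP : P.IsPrime) (hb : b ≤ P)
    (hd : Disjoint (avoiding e b : Set R) P) : P ∈ b.minimalPrimes := by
  by_contra hcon
  obtain ⟨z, hz, hz'⟩ := exists_mem_avoiding (e := e) (b := b) (P := P) fun p hp hPp =>
    absurd (le_antisymm hPp (hp.2 ⟨hP, hb⟩ hPp) ▸ hp) hcon
  exact Set.disjoint_left.1 hd hz' hz

lemma isArtinianRing_of_ringKrullDim_le_zero {b : Ideal R} (h : ringKrullDim (R ⧸ b) ≤ (0 : ℕ)) :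
    IsArtinianRing (R ⧸ b) :=
  isArtinianRing_iff_isNoetherianRing_krullDimLE_zero.2
    ⟨inferInstance, (Order.krullDimLE_iff 0 _).2 h⟩

variable {b : Ideal R} {M : Type u} [AddCommGroup M] [Module R M]

lemma ext_finiteLength_mem (hM : IsTorsionIdeal b M)
    (h : (SerreClass.finiteLength R).mem (torsionByIdeal b M)) (i : ℕ) :
    (SerreClass.finiteLength R).mem (ModExt R (R ⧸ b) M i) := by
  refine SerreClass.ext_mem_of_hom_mem (fun M _ _ hM h => ?_) hM
    ((SerreClass.ext_quotient_zero_mem_iff b).2 h) i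
  have hb : b.FG := IsNoetherian.noetherian b
  have := isArtinian_of_torsionByIdeal hb hM h.2
  exact exists_surjective_lsmul_quotient_torsionByIdeal hb

lemma finiteLength_mem_of_ringKrullDim_le_zero (hb : ringKrullDim (R ⧸ b) ≤ (0 : ℕ))
    (hM : IsNoetherian R M) (hbM : b ≤ Module.annihilator R M) :
    (SerreClass.finiteLength R).mem M := by
  have := isArtinianRing_of_ringKrullDim_le_zero hb
  exact ⟨hM, isArtinian_of_le_annihilator hbM⟩

lemma ext_noetherian_mem_of_ringKrullDim_le_one (hb : ringKrullDim (R ⧸ b) ≤ (1 : ℕ))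
    (hM : IsTorsionIdeal b M) (h₀ : (SerreClass.noetherian R).mem (ModExt R (R ⧸ b) M 0))
    (h₁ : (SerreClass.noetherian R).mem (ModExt R (R ⧸ b) M 1)) (i : ℕ) :
    (SerreClass.noetherian R).mem (ModExt R (R ⧸ b) M i) := by
  refine SerreClass.ext_mem_of_ext_one_mem (avoiding 0 b) (fun M _ _ hM h => ?_)
    (fun Z _ _ hZ hT h i => ?_) hM h₀ h₁ i
  · refine exists_smul_eq_smul_quotient_torsionByIdeal
      (fun P hP hbP hd => mem_minimalPrimes_of_disjoint_avoiding hP hbP hd) hM ?_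
    have : IsNoetherian R (torsionByIdeal b M) := h
    exact SerreClass.genericallyFG_mem_of_isNoetherian
  · have : IsNoetherian R (torsionByIdeal b Z) := h
    obtain ⟨s, hs, hsZ⟩ := exists_mem_annihilator_of_forall_exists_smul_eq_zero
      (T := avoiding 0 b) (L := torsionByIdeal b Z)
      fun x => (hT x).imp fun t ht => ⟨ht.1, Subtype.ext ht.2⟩
    exact (ext_finiteLength_mem hZ (finiteLength_mem_of_ringKrullDim_le_zero
      (ringKrullDim_quotient_sup_le hb hs) h (sup_le le_annihilator_torsionByIdeal
        ((Ideal.span_singleton_le_iff_mem _).2 hsZ))) i).1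

lemma powTorsion_mem_of_torsionByIdeal {s : R} (hM : IsTorsionIdeal b M)
    (h : (SerreClass.powTorsion s).mem (torsionByIdeal b M)) : (SerreClass.powTorsion s).mem M := by
  intro x
  obtain ⟨n, hn⟩ := hM x
  obtain ⟨k, hk⟩ := SerreClass.torsionByIdeal_pow_mem b h n ⟨x, mem_torsionByIdeal.2 hn⟩
  exact ⟨k, congrArg Subtype.val hk⟩

lemma exists_powTorsion_mem_of_genericallyFG {T : Submonoid R}
    (hT : ∀ x : M, ∃ t ∈ T, t • x = 0) (h : (SerreClass.genericallyFG T).mem M) :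
    ∃ s ∈ T, (SerreClass.powTorsion s).mem M := by
  obtain ⟨s, hs, L, hL, hsL⟩ := h
  have : Module.Finite R L := Module.Finite.iff_fg.2 hL
  obtain ⟨t, ht, htL⟩ := exists_mem_annihilator_of_forall_exists_smul_eq_zero (T := T) (L := L)
    fun x => (hT x.1).imp fun t ht => ⟨ht.1, Subtype.ext ht.2⟩
  refine ⟨s * t, T.mul_mem hs ht, fun v => ?_⟩
  obtain ⟨k, hk⟩ := hsL v
  have hts : t • s ^ k • v = 0 :=
    congrArg Subtype.val (Module.mem_annihilator.1 htL ⟨_, hk⟩)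
  refine ⟨k + 1, ?_⟩
  rw [show (s * t) ^ (k + 1) = (s * t ^ k) * (t * s ^ k) by ring, mul_smul, mul_smul t, hts,
    smul_zero]

lemma ext_genericallyFG_mem {T : Submonoid R}
    (hT : ∀ P : Ideal R, P.IsPrime → b ≤ P → Disjoint (T : Set R) P → P ∈ b.minimalPrimes)
    (hM : IsTorsionIdeal b M) (h₀ : (SerreClass.genericallyFG T).mem (ModExt R (R ⧸ b) M 0))
    (h₁ : (SerreClass.genericallyFG T).mem (ModExt R (R ⧸ b) M 1)) (i : ℕ) :
    (SerreClass.genericallyFG T).mem (ModExt R (R ⧸ b) M i) := by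
  refine SerreClass.ext_mem_of_ext_one_mem T
    (fun M _ _ hM h => exists_smul_eq_smul_quotient_torsionByIdeal hT hM h)
    (fun Z _ _ hZ hTZ h i => ?_) hM h₀ h₁ i
  obtain ⟨s, hs, hsZ⟩ := exists_powTorsion_mem_of_genericallyFG
    (fun x => (hTZ x.1).imp fun t ht => ⟨ht.1, Subtype.ext ht.2⟩) h
  refine ⟨s, hs, ⊥, Submodule.fg_bot, fun v => ?_⟩
  obtain ⟨k, hk⟩ := SerreClass.ext_mem (N := R ⧸ b) (powTorsion_mem_of_torsionByIdeal hZ hsZ) i v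
  exact ⟨k, (Submodule.mem_bot R).2 hk⟩

end GenericExt

/-! ### Koszul complexes -/

section Koszul

variable {R : Type u} [CommRing R] {S : SerreClass R} {a b : Ideal R}
  {M N : Type u} [AddCommGroup M] [Module R M] [AddCommGroup N] [Module R N]

lemma IsTorsionIdeal.prod (hM : IsTorsionIdeal a M) (hN : IsTorsionIdeal a N) :
    IsTorsionIdeal a (M × N) := by
  rintro ⟨m, n⟩
  obtain ⟨i, hi⟩ := hM m
  obtain ⟨j, hj⟩ := hN n
  exact ⟨i + j, fun x hx => Prod.ext (hi x (Ideal.pow_le_pow_right (Nat.le_add_right _ _) hx))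
    (hj x (Ideal.pow_le_pow_right (Nat.le_add_left _ _) hx))⟩

lemma IsTorsionIdeal.of_subsingleton [Subsingleton M] : IsTorsionIdeal a M :=
  fun _ => ⟨0, fun _ _ => Subsingleton.elim _ _⟩

lemma IsTorsionIdeal.sup (hM : IsTorsionIdeal a M) {c : Ideal R}
    (hc : c ≤ Module.annihilator R M) : IsTorsionIdeal (a ⊔ c) M := by
  intro m
  obtain ⟨n, hn⟩ := hM m
  refine ⟨n + 1, fun x hx => ?_⟩
  obtain ⟨y, hy, z, hz, rfl⟩ :=
    Submodule.mem_sup.1 (Ideal.sup_pow_add_le_pow_sup_pow (n := n) (m := 1) hx)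
  rw [pow_one] at hz
  rw [add_smul, hn y hy, Module.mem_annihilator.1 (hc hz), add_zero]

namespace SerreClass

lemma ext_prod_mem {A B : Type u} [AddCommGroup A] [Module R A] [AddCommGroup B] [Module R B]
    {i : ℕ} (hA : S.mem (ModExt R N A i)) (hB : S.mem (ModExt R N B i)) :
    S.mem (ModExt R N (A × B) i) :=
  ext_right_mem₂ (f := LinearMap.inl R A B) (g := LinearMap.snd R A B)
    ⟨LinearMap.inl_injective, LinearMap.snd_surjective, Function.Exact.inl_snd⟩ hA hB

lemma ext_mem_of_subsingleton_right [Subsingleton M] (i : ℕ) : S.mem (ModExt R N M i) := by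
  have : Subsingleton (ModExt R N M i) := by
    refine subsingleton_of_forall_eq 0 fun x => ?_
    rw [← ModExt.map_id i x, Subsingleton.elim (LinearMap.id : M →ₗ[R] M) 0, ModExt.map_zero]
  exact S.of_subsingleton

end SerreClass

/-- A cochain complex of `R`-modules in degrees `≥ 0`, in unbundled form. -/
structure ModComplex (R : Type u) [CommRing R] where
  X : ℕ → Type u
  [grp : ∀ i, AddCommGroup (X i)]
  [mod : ∀ i, Module R (X i)]
  d : ∀ i, X i →ₗ[R] X (i + 1)
  d_d : ∀ i x, d (i + 1) (d i x) = 0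

attribute [instance] ModComplex.grp ModComplex.mod

namespace ModComplex

/-- The multiplication by `y` on the complex `K` is homotopic to zero. -/
def IsNullHomotopic (K : ModComplex R) (y : R) : Prop :=
  ∃ h : ∀ i, K.X (i + 1) →ₗ[R] K.X i, (∀ x, h 0 (K.d 0 x) = y • x) ∧
    ∀ i x, K.d i (h i x) + h (i + 1) (K.d (i + 1) x) = y • x

/-- The complex with `M` in degree `r` and zero elsewhere. Functions on the proposition `i = r` are
used so that no case distinction on types is needed. -/
def single (M : Type u) [AddCommGroup M] [Module R M] (r : ℕ) : ModComplex R where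
  X i := PLift (i = r) → M
  d _ := 0
  d_d _ _ := rfl

/-- The mapping cone of the multiplication by `z`, shifted so that `K` is a subcomplex; this raises
the length of the complex by one in the negative direction. -/
abbrev cone (K : ModComplex R) (z : R) : ModComplex R where
  X i := K.X i × K.X (i + 1)
  d i := LinearMap.inl R _ _ ∘ₗ K.d i ∘ₗ LinearMap.fst R _ _ +
    (LinearMap.inl R _ _ ∘ₗ LinearMap.lsmul R _ z ∘ₗ LinearMap.snd R _ _ +
      (-1 : R) • LinearMap.inr R _ _ ∘ₗ K.d (i + 1) ∘ₗ LinearMap.snd R _ _)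
  d_d i x := by
    ext <;> simp [K.d_d]

variable {K : ModComplex R} {y z : R}

lemma isNullHomotopic_cone_self [Subsingleton (K.X 0)] : (K.cone z).IsNullHomotopic z := by
  refine ⟨fun i => LinearMap.inr R _ _ ∘ₗ LinearMap.fst R _ _, fun x => ?_, fun i x => ?_⟩
  · refine Prod.ext (Subsingleton.elim (α := K.X 0) _ _) ?_
    simp [show x.1 = 0 from Subsingleton.elim (α := K.X 0) _ _]
  · refine Prod.ext ?_ ?_ <;> simp

lemma IsNullHomotopic.cone [Subsingleton (K.X 0)] (hK : K.IsNullHomotopic y) :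
    (K.cone z).IsNullHomotopic y := by
  obtain ⟨h, -, hh⟩ := hK
  refine ⟨fun i => LinearMap.prodMap (h i) (-h (i + 1)), fun x => ?_, fun i x => ?_⟩
  · refine Prod.ext (Subsingleton.elim (α := K.X 0) _ _) ?_
    have := hh 0 x.2
    rw [Subsingleton.elim (h 0 x.2) 0] at this
    simpa using this
  · refine Prod.ext ?_ ?_
    · simp [← hh i x.1, add_add_add_comm _ (-(z • h (i + 1) x.2))]
    · simp [← hh (i + 1) x.2]

end ModComplex

/-- `K` behaves like the Koszul complex of `M` with respect to `l`, a list of elements of `b`,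
placed in degrees `r - l.length, …, r`: its terms are iterated extensions of copies of `M`, its
lowest term is a copy of `M`, the elements of `l` act on it by maps homotopic to zero, and its
differentials induce zero on `Ext(R/b, -)`. -/
structure IsKoszul (S : SerreClass R) (a b : Ideal R) (M : Type u) [AddCommGroup M] [Module R M]
    (r : ℕ) (l : List R) (K : ModComplex R) : Prop where
  subsingleton_low : ∀ i, i + l.length < r → Subsingleton (K.X i)
  subsingleton_high : ∀ i, r < i → Subsingleton (K.X i)
  ext_mem : ∀ j, S.mem (ModExt R (R ⧸ b) M j) → ∀ i, S.mem (ModExt R (R ⧸ b) (K.X i) j)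
  isTorsionIdeal : ∀ i, IsTorsionIdeal a (K.X i)
  ext_d : ∀ i j x, ModExt.map (R ⧸ b) (K.d i) j x = 0
  of_ext_mem : ∀ i j, i + l.length = r → S.mem (ModExt R (R ⧸ b) (K.X i) j) →
    S.mem (ModExt R (R ⧸ b) M j)
  isNullHomotopic : ∀ y ∈ l, K.IsNullHomotopic y

lemma isKoszul_single (hM : IsTorsionIdeal a M) (r : ℕ) :
    IsKoszul S a b M r [] (ModComplex.single M r) := by
  have isEmpty {i : ℕ} (h : i ≠ r) : IsEmpty (PLift (i = r)) := ⟨fun h' => h h'.down⟩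
  have equiv : (PLift (r = r) → M) ≃ₗ[R] M :=
    have : Unique (PLift (r = r)) := ⟨⟨⟨rfl⟩⟩, fun _ => rfl⟩
    LinearEquiv.funUnique (PLift (r = r)) R M
  have subsingleton {i : ℕ} (h : i ≠ r) : Subsingleton ((ModComplex.single (R := R) M r).X i) :=
    have := isEmpty h
    inferInstanceAs (Subsingleton (PLift (i = r) → M))
  refine ⟨fun i hi => subsingleton (by simp at hi; omega), fun i hi => subsingleton (by omega),
    fun j hj i => ?_, fun i => ?_, fun i j x => ModExt.map_zero _ _, ?_, by simp⟩
  · by_cases h : i = r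
    · subst h
      exact SerreClass.ext_right_mem_of_equiv equiv.symm hj
    · have := subsingleton h
      exact SerreClass.ext_mem_of_subsingleton_right j
  · by_cases h : i = r
    · subst h
      exact IsTorsionIdeal.of_injective hM equiv.toLinearMap equiv.injective
    · have := subsingleton h
      exact IsTorsionIdeal.of_subsingleton
  · rintro i j rfl hj
    exact SerreClass.ext_right_mem_of_equiv equiv hj

lemma IsKoszul.cone {r : ℕ} {l : List R} {K : ModComplex R} (hK : IsKoszul S a b M r l K)
    (hl : l.length < r) {z : R} (hz : z ∈ b) : IsKoszul S a b M r (z :: l) (K.cone z) where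
  subsingleton_low i hi := by
    rw [List.length_cons] at hi
    have := hK.subsingleton_low i (by omega)
    have := hK.subsingleton_low (i + 1) (by omega)
    exact inferInstanceAs (Subsingleton (K.X i × K.X (i + 1)))
  subsingleton_high i hi := by
    have := hK.subsingleton_high i hi
    have := hK.subsingleton_high (i + 1) (by omega)
    exact inferInstanceAs (Subsingleton (K.X i × K.X (i + 1)))
  ext_mem j hj i := SerreClass.ext_prod_mem (hK.ext_mem j hj i) (hK.ext_mem j hj (i + 1))
  isTorsionIdeal i := IsTorsionIdeal.prod (hK.isTorsionIdeal i) (hK.isTorsionIdeal (i + 1))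
  ext_d i j x := by
    have hz' : z ∈ Module.annihilator R (ModExt R (R ⧸ b) (K.X (i + 1)) j) :=
      ModExt.annihilator_le_left _ _ j (Ideal.annihilator_quotient.ge hz)
    change ModExt R (R ⧸ b) (K.X i × K.X (i + 1)) j at x
    change ModExt.map (B := K.X (i + 1) × K.X (i + 2)) (R ⧸ b) _ j x = 0
    rw [ModExt.map_add, ModExt.map_add, ModExt.map_smul]
    simp only [← ModExt.map_map, hK.ext_d, ModExt.map_lsmul, Module.mem_annihilator.1 hz',
      map_zero, smul_zero, add_zero]
  of_ext_mem i j h hj := by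
    rw [List.length_cons] at h
    refine hK.of_ext_mem (i + 1) j (by omega) ?_
    have := hK.subsingleton_low i (by omega)
    exact SerreClass.ext_right_mem_of_equiv (LinearEquiv.ofBijective (LinearMap.snd R _ _)
      ⟨fun x y hxy => Prod.ext (Subsingleton.elim _ _) hxy, LinearMap.snd_surjective⟩) hj
  isNullHomotopic y hy := by
    have := hK.subsingleton_low 0 (by omega)
    rcases List.mem_cons.1 hy with rfl | hy
    · exact ModComplex.isNullHomotopic_cone_self
    · exact (hK.isNullHomotopic y hy).cone

lemma exists_isKoszul (hM : IsTorsionIdeal a M) {r : ℕ} {l : List R} (hl : l.length ≤ r)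
    (hlb : ∀ y ∈ l, y ∈ b) : ∃ K, IsKoszul S a b M r l K := by
  induction l with
  | nil => exact ⟨_, isKoszul_single hM r⟩
  | cons z l ih =>
    rw [List.length_cons] at hl
    obtain ⟨K, hK⟩ := ih (by omega) fun y hy => hlb y (List.mem_cons_of_mem _ hy)
    exact ⟨_, hK.cone hl (hlb z List.mem_cons_self)⟩

end Koszul

section KoszulReduction

variable {R : Type u} [CommRing R] {S : SerreClass R} {a b : Ideal R}
  {M N : Type u} [AddCommGroup M] [Module R M] [AddCommGroup N] [Module R N]

namespace SerreClass

variable {U V W : Type u} [AddCommGroup U] [Module R U] [AddCommGroup V] [Module R V]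
  [AddCommGroup W] [Module R W] (S)

lemma ker_mem_of_exact {f : U →ₗ[R] V} {g : V →ₗ[R] W} (h : Function.Exact f g) (hU : S.mem U) :
    S.mem (LinearMap.ker g) := by
  rw [h.linearMap_ker_eq]
  exact S.of_surjective f.rangeRestrict f.surjective_rangeRestrict hU

lemma ker_comp_mem {f : U →ₗ[R] V} {g : V →ₗ[R] W} (hf : S.mem (LinearMap.ker f))
    (hg : S.mem (LinearMap.ker g)) : S.mem (LinearMap.ker (g ∘ₗ f)) := by
  refine S.of_exact (Submodule.inclusion (LinearMap.ker_le_ker_comp f g))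
    (f.restrict (p := LinearMap.ker (g ∘ₗ f)) (q := LinearMap.ker g) fun x hx => hx)
    (fun x => ?_) hf hg
  refine ⟨fun h => ⟨⟨x, congrArg Subtype.val h⟩, rfl⟩, ?_⟩
  rintro ⟨y, rfl⟩
  exact Subtype.ext y.2

end SerreClass

namespace ModComplex

variable (K : ModComplex R)

/-- The submodule of coboundaries in degree `i`. -/
def boundaries : ∀ i, Submodule R (K.X i)
  | 0 => ⊥
  | i + 1 => LinearMap.range (K.d i)

lemma boundaries_le_ker (i : ℕ) : K.boundaries i ≤ LinearMap.ker (K.d i) := by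
  cases i with
  | zero => exact bot_le
  | succ i =>
    rintro _ ⟨x, rfl⟩
    exact K.d_d i x

/-- The cohomology module in degree `i`. -/
abbrev Cohomology (i : ℕ) : Type u :=
  LinearMap.ker (K.d i) ⧸ (K.boundaries i).submoduleOf (LinearMap.ker (K.d i))

lemma isSES_cohomology (i : ℕ) : IsSES (Submodule.inclusion (K.boundaries_le_ker i))
    ((K.boundaries i).submoduleOf (LinearMap.ker (K.d i))).mkQ where
  injective := Submodule.inclusion_injective _
  surjective := Submodule.mkQ_surjective _
  exact := by
    rw [LinearMap.exact_iff, Submodule.ker_mkQ, Submodule.range_inclusion]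
    rfl

/-- The differential, as a map onto the coboundaries. -/
def toBoundaries (i : ℕ) : K.X i →ₗ[R] K.boundaries (i + 1) :=
  (K.d i).rangeRestrict

lemma isSES_toBoundaries (i : ℕ) : IsSES (LinearMap.ker (K.d i)).subtype (K.toBoundaries i) :=
  IsSES.of_rangeRestrict (K.d i)

instance : Subsingleton (K.boundaries 0) :=
  inferInstanceAs (Subsingleton (⊥ : Submodule R (K.X 0)))

variable {K}

lemma IsNullHomotopic.mem_annihilator_cohomology {y : R} (hy : K.IsNullHomotopic y) (i : ℕ) :
    y ∈ Module.annihilator R (K.Cohomology i) := by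
  obtain ⟨h, h₀, h₁⟩ := hy
  refine Module.mem_annihilator.2 fun x => ?_
  obtain ⟨⟨x, hx⟩, rfl⟩ := Submodule.mkQ_surjective _ x
  rw [← map_smul, Submodule.mkQ_apply, Submodule.Quotient.mk_eq_zero]
  change y • x ∈ K.boundaries i
  rw [LinearMap.mem_ker] at hx
  cases i with
  | zero =>
    rw [← h₀ x, hx, map_zero]
    exact zero_mem _
  | succ i =>
    rw [← h₁ i x, hx, map_zero, add_zero]
    exact LinearMap.mem_range_self _ _

lemma boundaries_ext_zero_mem {i : ℕ} (h : S.mem (ModExt R N (K.X i) 0)) :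
    S.mem (ModExt R N (K.boundaries i) 0) :=
  SerreClass.ext_zero_mem_of_injective (K.boundaries i).injective_subtype h

lemma boundaries_succ_ext_mem {i j : ℕ} (hX : S.mem (ModExt R N (K.X i) j))
    (hB : S.mem (ModExt R N (K.boundaries i) (j + 1)))
    (hH : S.mem (ModExt R N (K.Cohomology i) (j + 1))) :
    S.mem (ModExt R N (K.boundaries (i + 1)) j) :=
  SerreClass.ext_right_mem₃ (K.isSES_toBoundaries i) hX
    (SerreClass.ext_right_mem₂ (K.isSES_cohomology i) hB hH)

lemma boundaries_ext_succ_mem {i j : ℕ} (hX : S.mem (ModExt R N (K.X i) (j + 1)))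
    (hH : S.mem (ModExt R N (K.Cohomology i) j))
    (hB : S.mem (ModExt R N (K.boundaries (i + 1)) j)) :
    S.mem (ModExt R N (K.boundaries i) (j + 1)) :=
  SerreClass.ext_right_mem₁ (K.isSES_cohomology i) hH
    (SerreClass.ext_right_mem₁ (K.isSES_toBoundaries i) hB hX)

lemma boundaries_ext_mem {n : ℕ} (hX : ∀ i, ∀ j ≤ n, S.mem (ModExt R N (K.X i) j))
    (hH : ∀ i j, S.mem (ModExt R N (K.Cohomology i) j)) (i : ℕ) {j : ℕ} (hj : j ≤ n) :
    S.mem (ModExt R N (K.boundaries i) j) := by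
  induction j generalizing i with
  | zero => exact boundaries_ext_zero_mem (hX i 0 hj)
  | succ j ih => exact boundaries_ext_succ_mem (hX i _ hj) (hH i j) (ih (i + 1) (by omega))

lemma ker_map_boundaries_subtype_mem {i n : ℕ} (hH : S.mem (ModExt R N (K.Cohomology i) n))
    (hB : S.mem (ModExt R N (K.boundaries (i + 1)) n)) :
    S.mem (LinearMap.ker (ModExt.map N (K.boundaries i).subtype (n + 1))) := by
  have hfactor : ModExt.map N (K.boundaries i).subtype (n + 1) =
      ModExt.map N (LinearMap.ker (K.d i)).subtype (n + 1) ∘ₗ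
        ModExt.map N (Submodule.inclusion (K.boundaries_le_ker i)) (n + 1) := by
    ext x
    rw [LinearMap.comp_apply, ModExt.map_map, Submodule.subtype_comp_inclusion]
  have hincl := S.ker_mem_of_exact (ModExt.exact_mapδ_map (K.isSES_cohomology i) N n) hH
  have hker := S.ker_mem_of_exact (ModExt.exact_mapδ_map (K.isSES_toBoundaries i) N n) hB
  rw [hfactor]
  exact S.ker_comp_mem hincl hker

/- The map on `Ext` induced by `d 0` is zero, and up to `S` it is the one induced by the
projection of `X 0` onto the coboundaries, whose kernel comes from the cohomology in degree `0`. -/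
lemma zero_ext_succ_mem {n : ℕ} (hd : ∀ x, ModExt.map N (K.d 0) (n + 1) x = 0)
    (hH₀ : S.mem (ModExt R N (K.Cohomology 0) (n + 1)))
    (hH₁ : S.mem (ModExt R N (K.Cohomology 1) n))
    (hB : S.mem (ModExt R N (K.boundaries 2) n)) : S.mem (ModExt R N (K.X 0) (n + 1)) := by
  have hker : S.mem (ModExt R N (LinearMap.ker (K.d 0)) (n + 1)) :=
    SerreClass.ext_right_mem₂ (K.isSES_cohomology 0)
      (SerreClass.ext_mem_of_subsingleton_right _) hH₀
  refine SerreClass.of_exact_of_comp_eq_zero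
    (ModExt.exact_map_map (K.isSES_toBoundaries 0) N (n + 1)) (LinearMap.exact_subtype_ker_map
      (ModExt.map N (K.boundaries 1).subtype (n + 1))) (fun x => ?_) hker
    (ker_map_boundaries_subtype_mem hH₁ hB)
  rw [ModExt.map_map]
  exact hd x

end ModComplex

namespace IsKoszul

variable {r : ℕ} {l : List R} {K : ModComplex R}

lemma isTorsionIdeal_cohomology (hK : IsKoszul S a b M r l K) (i : ℕ) :
    IsTorsionIdeal (a ⊔ Ideal.ofList l) (K.Cohomology i) := by
  refine IsTorsionIdeal.sup ?_ (Ideal.span_le.2 fun y hy =>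
    (hK.isNullHomotopic y hy).mem_annihilator_cohomology i)
  exact IsTorsionIdeal.of_surjective
    (IsTorsionIdeal.of_injective (hK.isTorsionIdeal i) _ (Submodule.injective_subtype _)) _
    (Submodule.mkQ_surjective _)

/- The hypothesis on `b`-torsion modules is applied to the cohomology; the coboundaries are
controlled in degrees `i + j ≤ r + 2` by induction on `i`. -/
lemma cohomology_ext_mem (hK : IsKoszul S a b M r l K) (hb : b = a ⊔ Ideal.ofList l)
    (hS : ∀ (N : Type u) [AddCommGroup N] [Module R N], IsTorsionIdeal b N →
      S.mem (ModExt R (R ⧸ b) N 0) → S.mem (ModExt R (R ⧸ b) N 1) →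
        ∀ i, S.mem (ModExt R (R ⧸ b) N i))
    (hM : ∀ i ≤ r + 1, S.mem (ModExt R (R ⧸ b) M i)) (i j : ℕ) :
    S.mem (ModExt R (R ⧸ b) (K.Cohomology i) j) := by
  have hX (i : ℕ) {j : ℕ} (hj : j ≤ r + 1) : S.mem (ModExt R (R ⧸ b) (K.X i) j) :=
    hK.ext_mem j (hM j hj) i
  have cohomology_mem {i : ℕ} (hi : i ≤ r)
      (hB : ∀ j, i + j ≤ r + 2 → S.mem (ModExt R (R ⧸ b) (K.boundaries i) j)) (j : ℕ) :
      S.mem (ModExt R (R ⧸ b) (K.Cohomology i) j) := by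
    refine hS _ (hb ▸ hK.isTorsionIdeal_cohomology i) ?_ ?_ j
    · exact SerreClass.ext_right_mem₃ (K.isSES_cohomology i)
        (SerreClass.ext_zero_mem_of_injective (Submodule.injective_subtype _)
          (hX i (Nat.zero_le _))) (hB 1 (by omega))
    · exact SerreClass.ext_right_mem₃ (K.isSES_cohomology i)
        (SerreClass.ext_right_mem₁ (K.isSES_toBoundaries i)
          (ModComplex.boundaries_ext_zero_mem (hX (i + 1) (Nat.zero_le _))) (hX i (by omega)))
        (hB 2 (by omega))
  have boundaries_mem {i : ℕ} (hi : i ≤ r) {j : ℕ} (hij : i + j ≤ r + 2) :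
      S.mem (ModExt R (R ⧸ b) (K.boundaries i) j) := by
    induction i generalizing j with
    | zero => exact SerreClass.ext_mem_of_subsingleton_right j
    | succ i ih =>
      exact ModComplex.boundaries_succ_ext_mem (hX i (by omega)) (ih (by omega) (by omega))
        (cohomology_mem (by omega) (fun j => ih (by omega)) _)
  rcases le_or_gt i r with hi | hi
  · exact cohomology_mem hi (fun j => boundaries_mem hi) j
  · have := hK.subsingleton_high i hi
    exact SerreClass.ext_mem_of_subsingleton_right j

lemma ext_succ_mem (hK : IsKoszul S a b M l.length l K)
    (hH : ∀ i j, S.mem (ModExt R (R ⧸ b) (K.Cohomology i) j)) {n : ℕ}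
    (hM : ∀ i ≤ n, S.mem (ModExt R (R ⧸ b) M i)) : S.mem (ModExt R (R ⧸ b) M (n + 1)) :=
  hK.of_ext_mem 0 (n + 1) (Nat.zero_add _) <|
    ModComplex.zero_ext_succ_mem (hK.ext_d 0 (n + 1)) (hH 0 _) (hH 1 n) <|
      ModComplex.boundaries_ext_mem (fun i j hj => hK.ext_mem j (hM j hj) i) hH 2 le_rfl

end IsKoszul

lemma SerreClass.ext_mem_of_ext_mem_le (S : SerreClass R) (l : List R)
    (hb : b = a ⊔ Ideal.ofList l)
    (hS : ∀ (N : Type u) [AddCommGroup N] [Module R N], IsTorsionIdeal b N →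
      S.mem (ModExt R (R ⧸ b) N 0) → S.mem (ModExt R (R ⧸ b) N 1) →
        ∀ i, S.mem (ModExt R (R ⧸ b) N i))
    (hM : IsTorsionIdeal a M) (h : ∀ i ≤ l.length + 1, S.mem (ModExt R (R ⧸ b) M i)) (i : ℕ) :
    S.mem (ModExt R (R ⧸ b) M i) := by
  obtain ⟨K, hK⟩ := exists_isKoszul (S := S) (b := b) hM le_rfl
    fun y hy => hb ▸ Ideal.mem_sup_right (Ideal.subset_span hy)
  induction i using Nat.strong_induction_on with
  | _ i ih =>
    cases i with
    | zero => exact h 0 (Nat.zero_le _)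
    | succ i =>
      exact hK.ext_succ_mem (hK.cohomology_ext_mem hb hS h) fun j hj => ih j (by omega)

end KoszulReduction

/-! ### Adically complete rings and Tate modules -/

section Complete

variable {R : Type u} [CommRing R] (I : Ideal R) {M N : Type u} [AddCommGroup M] [Module R M]
  [AddCommGroup N] [Module R N]

lemma finite_quotient_of_ker_le [IsNoetherian R N] (f : M →ₗ[R] N) {K : Submodule R M}
    (h : LinearMap.ker f ≤ K) : Module.Finite R (M ⧸ K) := by
  have := Module.Finite.equiv f.quotKerEquivRange.symm
  exact Module.Finite.of_surjective (Submodule.factor h) (Submodule.factor_surjective h)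

lemma isPrecomplete_pi [IsPrecomplete I R] (n : ℕ) : IsPrecomplete I (Fin n → R) := by
  rw [← AdicCompletion.of_surjective_iff]
  intro x
  choose f hf using fun j => AdicCompletion.of_surjective I R (AdicCompletion.piEquivFin I n x j)
  refine ⟨f, (AdicCompletion.piEquivFin I n).injective (funext fun j => ?_)⟩
  rw [← hf j, AdicCompletion.piEquivFin_apply]
  rfl

lemma finite_of_finite_quotient_smul_top [IsPrecomplete I R] [IsHausdorff I M]
    [Module.Finite R (M ⧸ (I • ⊤ : Submodule R M))] : Module.Finite R M := by
  obtain ⟨n, g, hg⟩ := Module.Finite.exists_fin' R (M ⧸ (I • ⊤ : Submodule R M))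
  obtain ⟨f, hf⟩ := Module.projective_lifting_property (Submodule.mkQ (I • ⊤ : Submodule R M)) g
    (Submodule.mkQ_surjective _)
  have := isPrecomplete_pi I n
  exact Module.Finite.of_surjective f (surjective_of_mkQ_comp_surjective (I := I) (hf ▸ hg))

lemma isHausdorff_submodule [IsHausdorff I M] (K : Submodule R M) : IsHausdorff I K where
  haus' x hx := by
    refine Subtype.ext (IsHausdorff.haus (I := I) inferInstance (x : M) fun n => ?_)
    have := hx n
    rw [SModEq.zero, Submodule.mem_smul_top_iff] at this
    exact SModEq.zero.2 (Submodule.smul_mono le_rfl le_top this)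

lemma isNoetherian_quotient [IsNoetherianRing (R ⧸ I)] : IsNoetherian R (R ⧸ I) :=
  isNoetherian_iff'.2 (Submodule.orderIsoOfAlgebraMapSurjective (R := R) (S := R ⧸ I)
    (M := R ⧸ I) Ideal.Quotient.mk_surjective).symm.toOrderEmbedding.wellFoundedGT

lemma isNoetherianRing_of_isAdicComplete (s : R) [IsAdicComplete (Ideal.span {s}) R]
    [IsNoetherianRing (R ⧸ Ideal.span {s})] : IsNoetherianRing R := by
  refine IsNoetherianRing.of_prime fun P hP => ?_
  by_cases hs : s ∈ P
  · refine Ideal.fg_of_fg_map_of_fg_inf_ker_of_surjective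
      (IsNoetherian.noetherian (P.map (Ideal.Quotient.mk (Ideal.span {s})))) ?_
      Ideal.Quotient.mk_surjective
    rw [Ideal.mk_ker, inf_eq_right.2 ((Ideal.span_singleton_le_iff_mem _).2 hs)]
    exact Submodule.fg_span_singleton s
  · have := isHausdorff_submodule (Ideal.span {s}) P
    have := isNoetherian_quotient (Ideal.span {s})
    -- Primality of `P` gives `P ∩ sR = sP`, so `P / sP` embeds in `R / sR`.
    have : Module.Finite R (P ⧸ (Ideal.span {s} • ⊤ : Submodule R P)) := by
      refine finite_quotient_of_ker_le (Submodule.mkQ (Ideal.span {s}) ∘ₗ P.subtype) fun x hx => ?_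
      obtain ⟨y, hy⟩ := Ideal.mem_span_singleton.1 ((Submodule.Quotient.mk_eq_zero _).1 hx)
      rw [Submodule.ideal_span_singleton_smul, Submodule.mem_smul_pointwise_iff_exists]
      exact ⟨⟨y, (hP.mem_or_mem (hy ▸ x.2)).resolve_left hs⟩, trivial, Subtype.ext hy.symm⟩
    exact Module.Finite.iff_fg.1 (finite_of_finite_quotient_smul_top (Ideal.span {s}))

lemma ringKrullDim_quotient_le_succ [IsNoetherianRing R] {s : R}
    (hs : s ∈ (⊥ : Ideal R).jacobson) :
    ringKrullDim (R ⧸ I) ≤ ringKrullDim (R ⧸ (I ⊔ Ideal.span {s})) + 1 := by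
  have hs' : Ideal.Quotient.mk I s ∈ Ring.jacobson (R ⧸ I) := by
    rw [Ideal.jacobson_bot] at hs
    exact Ring.le_comap_jacobson (Ideal.Quotient.mk I) hs
  have h := ringKrullDim_le_ringKrullDim_quotient_add_card {Ideal.Quotient.mk I s}
    (by simpa using hs')
  have e := ringKrullDim_eq_of_ringEquiv
    (DoubleQuot.quotQuotEquivQuotSup I (Ideal.span {s}))
  rw [Ideal.map_span, Set.image_singleton] at e
  rw [Finset.coe_singleton, e] at h
  simpa using h

end Complete

section TateModule

variable {R : Type u} [CommRing R] {B : Type u} [AddCommGroup B] [Module R B] {s : R}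

lemma isTorsionIdeal_span_singleton_iff :
    IsTorsionIdeal (Ideal.span {s}) B ↔ ∀ x : B, ∃ k : ℕ, s ^ k • x = 0 := by
  refine forall_congr' fun x => exists_congr fun k => ?_
  rw [Ideal.span_singleton_pow]
  refine ⟨fun h => h _ (Ideal.mem_span_singleton_self _), fun h a ha => ?_⟩
  obtain ⟨c, rfl⟩ := Ideal.mem_span_singleton'.1 ha
  rw [mul_smul, h, smul_zero]

lemma nontrivial_ker_lsmul [Nontrivial B] (htor : IsTorsionIdeal (Ideal.span {s}) B) :
    Nontrivial (LinearMap.ker (LinearMap.lsmul R B s)) := by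
  rw [Submodule.nontrivial_iff_ne_bot, Ne, LinearMap.ker_eq_bot]
  intro hinj
  obtain ⟨x, hx⟩ := exists_ne (0 : B)
  obtain ⟨k, hk⟩ := isTorsionIdeal_span_singleton_iff.1 htor x
  exact hx (by
    induction k with
    | zero => simpa using hk
    | succ k ih =>
      refine ih (hinj ?_)
      rw [LinearMap.lsmul_apply, ← mul_smul, ← pow_succ', hk, map_zero])

variable (B s)

/-- The `s`-adic Tate module of `B`, the inverse limit of the torsion submodules `B[sᵏ⁺¹]` along
multiplication by `s`, as a submodule of the sequences in `B`: the `k`-th entry lies in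
`B[sᵏ⁺¹]`. -/
def tateModule : Submodule R (ℕ → B) where
  carrier := {w | s • w 0 = 0 ∧ ∀ k, s • w (k + 1) = w k}
  add_mem' h h' := ⟨by simp [h.1, h'.1], fun k => by simp [h.2, h'.2]⟩
  zero_mem' := ⟨by simp, fun k => by simp⟩
  smul_mem' c w h := ⟨by simp [smul_comm s c, h.1], fun k => by simp [smul_comm s c, h.2]⟩

namespace tateModule

variable {B s}

lemma pow_smul (w : tateModule B s) (m k : ℕ) : s ^ m • w.1 (k + m) = w.1 k := by
  induction m with
  | zero => simp
  | succ m ih => rw [pow_succ, mul_smul, ← add_assoc, w.2.2, ih]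

lemma pow_smul_eq_zero (w : tateModule B s) (k : ℕ) : s ^ (k + 1) • w.1 k = 0 := by
  rw [pow_succ', mul_smul, ← w.2.1, ← pow_smul w k 0, zero_add]

lemma mem_smul_top_of_apply_zero_eq_zero {w : tateModule B s} (h : w.1 0 = 0) :
    w ∈ (Ideal.span {s} • ⊤ : Submodule R (tateModule B s)) := by
  rw [Submodule.ideal_span_singleton_smul, Submodule.mem_smul_pointwise_iff_exists]
  refine ⟨⟨fun k => w.1 (k + 1), by simpa [w.2.2] using h, fun k => w.2.2 _⟩, trivial, ?_⟩
  exact Subtype.ext (funext w.2.2)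

lemma exists_apply_zero_eq (hdiv : Function.Surjective (LinearMap.lsmul R B s)) {x : B}
    (hx : s • x = 0) :
    ∃ w : tateModule B s, w.1 0 = x := by
  choose f hf using hdiv
  exact ⟨⟨fun k => f^[k] x, hx, fun k => by
    simp only [Function.iterate_succ_apply', ← LinearMap.lsmul_apply, hf]⟩, rfl⟩

lemma isHausdorff : IsHausdorff (Ideal.span {s}) (tateModule B s) where
  haus' x hx := Subtype.ext <| funext fun k => by
    have := hx (k + 1)
    rw [SModEq.zero, Ideal.span_singleton_pow, Submodule.ideal_span_singleton_smul,
      Submodule.mem_smul_pointwise_iff_exists] at this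
    obtain ⟨y, -, rfl⟩ := this
    exact pow_smul_eq_zero y k

lemma finite [IsPrecomplete (Ideal.span {s}) R]
    [IsNoetherian R (LinearMap.ker (LinearMap.lsmul R B s))] :
    Module.Finite R (tateModule B s) := by
  let evalZero : tateModule B s →ₗ[R] LinearMap.ker (LinearMap.lsmul R B s) :=
    LinearMap.codRestrict _ (LinearMap.proj (φ := fun _ : ℕ => B) 0 ∘ₗ (tateModule B s).subtype)
      fun w => w.2.1
  have := isHausdorff (B := B) (s := s)
  have := finite_quotient_of_ker_le evalZero fun w hw =>
    mem_smul_top_of_apply_zero_eq_zero (congrArg Subtype.val hw)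
  exact finite_of_finite_quotient_smul_top (Ideal.span {s})

lemma nontrivial [Nontrivial B] (hdiv : Function.Surjective (LinearMap.lsmul R B s))
    (htor : IsTorsionIdeal (Ideal.span {s}) B) : Nontrivial (tateModule B s) := by
  have := nontrivial_ker_lsmul htor
  obtain ⟨⟨x, hsx⟩, hx⟩ := exists_ne (0 : LinearMap.ker (LinearMap.lsmul R B s))
  obtain ⟨w, rfl⟩ := exists_apply_zero_eq hdiv hsx
  exact ⟨w, 0, fun h => hx (Subtype.ext (congrFun (congrArg Subtype.val h) 0))⟩

lemma le_annihilator_quotient {b : Ideal R}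
    (hb : b ≤ Module.annihilator R (LinearMap.ker (LinearMap.lsmul R B s))) :
    b ≤ Module.annihilator R
      (tateModule B s ⧸ (Ideal.span {s} • ⊤ : Submodule R (tateModule B s))) := by
  refine fun a ha => Module.mem_annihilator.2 fun x => ?_
  obtain ⟨w, rfl⟩ := Submodule.mkQ_surjective _ x
  rw [← map_smul, Submodule.mkQ_apply, Submodule.Quotient.mk_eq_zero]
  exact mem_smul_top_of_apply_zero_eq_zero
    (congrArg Subtype.val (Module.mem_annihilator.1 (hb ha) ⟨w.1 0, w.2.1⟩))

lemma eq_zero_of_smul_eq_zero {z : R} [Module.Finite R (LinearMap.ker (LinearMap.lsmul R B z))]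
    (htor : IsTorsionIdeal (Ideal.span {s}) B) {w : tateModule B s} (hw : z • w = 0) : w = 0 := by
  obtain ⟨_, ⟨m, rfl⟩, hm⟩ := exists_mem_annihilator_of_forall_exists_smul_eq_zero
    (T := Submonoid.powers s) (L := LinearMap.ker (LinearMap.lsmul R B z)) fun x =>
      (isTorsionIdeal_span_singleton_iff.1 htor x).elim fun k hk =>
        ⟨s ^ k, ⟨k, rfl⟩, Subtype.ext hk⟩
  refine Subtype.ext (funext fun k => ?_)
  have hz : z • w.1 (k + m) = 0 := congrFun (congrArg Subtype.val hw) _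
  rw [← pow_smul w m k]
  exact congrArg Subtype.val (Module.mem_annihilator.1 hm ⟨w.1 (k + m), hz⟩)

end tateModule

variable {B s}

lemma ringKrullDim_quotient_sup_le_zero_of_mem_associatedPrimes {M : Type u} [AddCommGroup M]
    [Module R M] [Module.Finite R M] {J P : Ideal R} [hJ : J.IsMaximal] {n : ℕ}
    (h : J ^ n ≤ Module.annihilator R (M ⧸ (Ideal.span {s} • ⊤ : Submodule R M)))
    (hP : P ∈ associatedPrimes R M) : ringKrullDim (R ⧸ (P ⊔ Ideal.span {s})) ≤ (0 : ℕ) := by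
  have eq_of_le : ∀ q : PrimeSpectrum R, P ⊔ Ideal.span {s} ≤ q.asIdeal → q.asIdeal = J := by
    intro q hq
    have hqP : q ∈ Module.support R M := by
      rw [Module.mem_support_iff_of_finite]
      exact (Submodule.annihilator_top.ge.trans hP.annihilator_le).trans (le_sup_left.trans hq)
    have hqs : q ∈ Module.support R (M ⧸ (Ideal.span {s} • ⊤ : Submodule R M)) := by
      rw [Module.support_quotient]
      exact ⟨hqP, le_sup_right.trans hq⟩
    exact (hJ.eq_of_le q.2.ne_top
      (q.2.le_of_pow_le (h.trans (Module.annihilator_le_of_mem_support hqs)))).symm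
  refine ringKrullDim_quotient_le_iff.2 fun l hl => ?_
  by_contra hlen
  have hlt : l 0 < l ⟨1, by omega⟩ := l.strictMono (by simp [Fin.lt_def])
  exact hlt.ne (PrimeSpectrum.ext
    ((eq_of_le _ hl).trans (eq_of_le _ (hl.trans hlt.le)).symm))

lemma exists_mem_avoiding_not_isNoetherian [IsNoetherianRing R]
    [IsAdicComplete (Ideal.span {s}) R] [Nontrivial B]
    (hdiv : Function.Surjective (LinearMap.lsmul R B s)) (htor : IsTorsionIdeal (Ideal.span {s}) B)
    (hK : IsNoetherian R (LinearMap.ker (LinearMap.lsmul R B s))) {J : Ideal R} [J.IsMaximal]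
    {n : ℕ} (hJ : J ^ n ≤ Module.annihilator R (LinearMap.ker (LinearMap.lsmul R B s)))
    {e : ℕ} (he : 1 ≤ e) (b : Ideal R) :
    ∃ z ∈ avoiding e b, ¬ IsNoetherian R (LinearMap.ker (LinearMap.lsmul R B z)) := by
  have := tateModule.finite (B := B) (s := s)
  have := tateModule.nontrivial hdiv htor
  obtain ⟨P, hP⟩ := associatedPrimes.nonempty R (tateModule B s)
  have hdim : ringKrullDim (R ⧸ P) ≤ 1 :=
    calc ringKrullDim (R ⧸ P)
      _ ≤ ringKrullDim (R ⧸ (P ⊔ Ideal.span {s})) + 1 := ringKrullDim_quotient_le_succ P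
        (IsAdicComplete.le_jacobson_bot _ (Ideal.mem_span_singleton_self s))
      _ ≤ ((0 : ℕ) : WithBot ℕ∞) + 1 := by
        gcongr
        exact ringKrullDim_quotient_sup_le_zero_of_mem_associatedPrimes
          (tateModule.le_annihilator_quotient hJ) hP
      _ = 1 := by simp
  obtain ⟨z, hzP, hz⟩ := exists_mem_avoiding (e := e) (b := b) (P := P) fun p _ hPp =>
    (ringKrullDim_quotient_anti hPp).trans (hdim.trans (by exact_mod_cast he))
  refine ⟨z, hz, fun hN => hP.isPrime.ne_top ?_⟩
  obtain ⟨-, w, hw⟩ := isAssociatedPrime_iff.1 hP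
  have hzw : z • w = 0 := by simpa [hw] using hzP
  simp [hw, tateModule.eq_zero_of_smul_eq_zero htor hzw]

end TateModule

/-! ### The dimension induction -/

section DimensionInduction

variable {R : Type u} [CommRing R] [IsNoetherianRing R] {M : Type u} [AddCommGroup M] [Module R M]

namespace SerreClass

variable {S : SerreClass R} {b : Ideal R} {z : R}

lemma ker_ext_comap_rangeRestrict_mem (f : (R ⧸ b) →ₗ[R] (R ⧸ b)) {c : Ideal R}
    (hc : c ≤ Module.annihilator R (LinearMap.ker f))
    (h : ∀ j, S.mem (ModExt R (R ⧸ c) M j)) (i : ℕ) :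
    S.mem (LinearMap.ker (ModExt.comap f.rangeRestrict M i)) := by
  cases i with
  | zero =>
    have : Subsingleton (LinearMap.ker (ModExt.comap f.rangeRestrict M 0)) := by
      rw [LinearMap.ker_eq_bot.2 (ModExt.comap_zero_injective f.surjective_rangeRestrict)]
      infer_instance
    exact S.of_subsingleton
  | succ i =>
    exact S.ker_mem_of_exact (ModExt.exact_comapδ_comap (IsSES.of_rangeRestrict f) M i)
      (ext_mem_of_le_annihilator (fun j _ => h j) hc le_rfl)

lemma ker_lsmul_ext_mem (h : ∀ j, S.mem (ModExt R (R ⧸ (b ⊔ Ideal.span {z})) M j)) (i : ℕ) :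
    S.mem (LinearMap.ker (LinearMap.lsmul R (ModExt R (R ⧸ b) M i) z)) := by
  set f : (R ⧸ b) →ₗ[R] (R ⧸ b) := LinearMap.lsmul R (R ⧸ b) z
  have hf : LinearMap.lsmul R (ModExt R (R ⧸ b) M i) z =
      ModExt.comap f.rangeRestrict M i ∘ₗ ModExt.comap (LinearMap.range f).subtype M i := by
    ext x : 1
    rw [LinearMap.comp_apply, ModExt.comap_comap]
    exact (ModExt.comap_lsmul z i x).symm
  have hb : b ≤ Module.annihilator R (R ⧸ b) := Ideal.annihilator_quotient.ge
  have hker : b ⊔ Ideal.span {z} ≤ Module.annihilator R (LinearMap.ker f) :=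
    sup_le (hb.trans (LinearMap.annihilator_le_of_injective _ (Submodule.subtype_injective _)))
      ((Ideal.span_singleton_le_iff_mem _).2
        (Module.mem_annihilator.2 fun x => Subtype.ext x.2))
  have hcoker : b ⊔ Ideal.span {z} ≤ Module.annihilator R ((R ⧸ b) ⧸ LinearMap.range f) := by
    refine sup_le (hb.trans (LinearMap.annihilator_le_of_surjective _
      (Submodule.mkQ_surjective _))) ((Ideal.span_singleton_le_iff_mem _).2 ?_)
    refine Module.mem_annihilator.2 fun x => ?_
    obtain ⟨x, rfl⟩ := Submodule.mkQ_surjective _ x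
    exact (Submodule.Quotient.mk_eq_zero _).2 ⟨x, rfl⟩
  rw [hf]
  exact S.ker_comp_mem
    (S.ker_mem_of_exact (ModExt.exact_comap_comap (IsSES.of_submodule (LinearMap.range f)) M i)
      (ext_mem_of_le_annihilator (fun j _ => h j) hcoker le_rfl))
    (ker_ext_comap_rangeRestrict_mem f hker h i)

end SerreClass

/-- The finiteness theorem in dimension `e`: whenever `b` is generated over `a` by `l.length`
elements, `dim R/b ≤ e` and `M` is `a`-torsion, the modules `Ext^i(R/b, M)` are all Noetherian as
soon as they are for `i ≤ e + l.length`. The elements `l` leave room for the induction on `e`, which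
enlarges `b` but keeps `a`. -/
def FiniteExtBound (e : ℕ) : Prop :=
  ∀ (R : Type u) [CommRing R] [IsNoetherianRing R] (a b : Ideal R) (l : List R),
    b = a ⊔ Ideal.ofList l → ringKrullDim (R ⧸ b) ≤ (e : ℕ) →
    ∀ (M : Type u) [AddCommGroup M] [Module R M], IsTorsionIdeal a M →
    (∀ i ≤ e + l.length, (SerreClass.noetherian R).mem (ModExt R (R ⧸ b) M i)) →
    ∀ i, (SerreClass.noetherian R).mem (ModExt R (R ⧸ b) M i)

lemma finiteExtBound_one : FiniteExtBound.{u} 1 := by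
  intro R _ _ a b l hb hdim M _ _ hM h i
  exact SerreClass.ext_mem_of_ext_mem_le (SerreClass.noetherian R) l hb
    (fun N _ _ hN h₀ h₁ => ext_noetherian_mem_of_ringKrullDim_le_one hdim hN h₀ h₁) hM
    (fun i hi => h i (by omega)) i

variable {a b : Ideal R} {l : List R} {e : ℕ}

lemma FiniteExtBound.isNoetherian_ker_lsmul_ext (H : FiniteExtBound.{u} e)
    (hb : b = a ⊔ Ideal.ofList l) (hdim : ringKrullDim (R ⧸ b) ≤ (e + 1 : ℕ))
    (hM : IsTorsionIdeal a M)
    (h : ∀ i ≤ e + 1 + l.length, (SerreClass.noetherian R).mem (ModExt R (R ⧸ b) M i)) {z : R}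
    (hz : z ∈ avoiding e b) (i : ℕ) :
    IsNoetherian R (LinearMap.ker (LinearMap.lsmul R (ModExt R (R ⧸ b) M i) z)) := by
  refine SerreClass.ker_lsmul_ext_mem (S := SerreClass.noetherian R) (fun j => ?_) i
  refine H R a _ (z :: l) ?_ (ringKrullDim_quotient_sup_le hdim hz) M hM (fun j hj => ?_) j
  · rw [hb, Ideal.ofList_cons, sup_assoc, sup_comm (Ideal.ofList l)]
  · refine SerreClass.ext_mem_of_le_annihilator (b := b) (t := j) (fun k hk => h k ?_)
      (le_sup_left.trans Ideal.annihilator_quotient.ge) le_rfl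
    simp only [List.length_cons] at hj
    omega

lemma genericallyFG_ext_mem (hb : b = a ⊔ Ideal.ofList l) (hM : IsTorsionIdeal a M)
    (h : ∀ i ≤ l.length + 1, (SerreClass.noetherian R).mem (ModExt R (R ⧸ b) M i)) (i : ℕ) :
    (SerreClass.genericallyFG (avoiding e b)).mem (ModExt R (R ⧸ b) M i) := by
  refine SerreClass.ext_mem_of_ext_mem_le _ l hb (fun N _ _ hN h₀ h₁ =>
    ext_genericallyFG_mem (fun P hP hbP hd => mem_minimalPrimes_of_disjoint_avoiding hP hbP hd)
      hN h₀ h₁) hM (fun i hi => ?_) i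
  have : IsNoetherian R (ModExt R (R ⧸ b) M i) := h i hi
  exact SerreClass.genericallyFG_mem_of_isNoetherian

end DimensionInduction

/-! ### Flat base change and completion -/

section BaseChange

variable {A A' : Type u} [CommRing A] [CommRing A'] [Algebra A A'] {I m : Ideal A}
  {B : Type u} [AddCommGroup B] [Module A B]

variable (A') in
lemma IsTorsionIdeal.baseChange (h : IsTorsionIdeal I B) :
    IsTorsionIdeal (I.map (algebraMap A A')) (A' ⊗[A] B) := by
  intro x
  induction x with
  | zero => exact ⟨0, fun _ _ => smul_zero _⟩
  | add x y hx hy =>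
    obtain ⟨n, hn⟩ := hx
    obtain ⟨k, hk⟩ := hy
    refine ⟨max n k, fun c hc => ?_⟩
    rw [smul_add, hn c (Ideal.pow_le_pow_right (le_max_left n k) hc),
      hk c (Ideal.pow_le_pow_right (le_max_right n k) hc), add_zero]
  | tmul r x =>
    obtain ⟨n, hn⟩ := h x
    refine ⟨n, fun c hc => smul_eq_zero_of_mem_map (b := I ^ n) (fun a ha => ?_)
      (by rwa [Ideal.map_pow])⟩
    rw [← TensorProduct.tmul_smul, hn a ha, TensorProduct.tmul_zero]

variable (A' B) in
lemma map_annihilator_le_annihilator_baseChange :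
    (Module.annihilator A B).map (algebraMap A A') ≤ Module.annihilator A' (A' ⊗[A] B) := by
  refine fun a ha => Module.mem_annihilator.2 fun x =>
    smul_eq_zero_of_mem_map (b := Module.annihilator A B) (fun r hr => ?_) ha
  induction x with
  | zero => exact smul_zero _
  | add x y hx hy => rw [smul_add, hx, hy, add_zero]
  | tmul c x => rw [← TensorProduct.tmul_smul, Module.mem_annihilator.1 hr, TensorProduct.tmul_zero]

variable (A' B) in
lemma lsmul_baseChange (s : A) : (LinearMap.lsmul A B s).baseChange A' =
    LinearMap.lsmul A' (A' ⊗[A] B) (algebraMap A A' s) :=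
  TensorProduct.AlgebraTensorModule.curry_injective (by ext; simp)

variable (A' B) in
lemma nonempty_baseChange_ker_lsmul_equiv [Module.Flat A A'] (s : A) :
    Nonempty (A' ⊗[A] LinearMap.ker (LinearMap.lsmul A B s) ≃ₗ[A']
      LinearMap.ker (LinearMap.lsmul A' (A' ⊗[A] B) (algebraMap A A' s))) := by
  rw [← lsmul_baseChange]
  exact ⟨LinearMap.tensorKerEquiv A' A' (LinearMap.lsmul A B s)⟩

variable (A') in
lemma nontrivial_baseChange_of_map_ne_top [Module.Flat A A'] {x : B}
    (hx : (Ideal.torsionOf A B x).map (algebraMap A A') ≠ ⊤) : Nontrivial (A' ⊗[A] B) := by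
  set J := Ideal.torsionOf A B x
  have : Nontrivial (A' ⧸ J.map (algebraMap A A')) := Ideal.Quotient.nontrivial_iff.2 hx
  have : Nontrivial (A' ⊗[A] (A ⧸ J)) :=
    (Ideal.qoutMapEquivTensorQout A' (I := J)).symm.toEquiv.nontrivial
  have hinj : Function.Injective
      ((A ∙ x).subtype ∘ₗ (Ideal.quotTorsionOfEquivSpanSingleton A B x).toLinearMap) :=
    (A ∙ x).injective_subtype.comp (LinearEquiv.injective _)
  exact (Module.Flat.lTensor_preserves_injective_linearMap (M := A') _ hinj).nontrivial

section QuotientMap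

lemma isNoetherianRing_of_surjective_quotientMap [IsNoetherianRing A] {s : A}
    [IsAdicComplete (Ideal.span {algebraMap A A' s}) A']
    (h : Function.Surjective (Ideal.quotientMap ((Ideal.span {s}).map (algebraMap A A'))
      (algebraMap A A') Ideal.le_comap_map)) : IsNoetherianRing A' := by
  have := isNoetherianRing_of_surjective _ _ _ h
  rw [Ideal.map_span, Set.image_singleton] at this
  exact isNoetherianRing_of_isAdicComplete (algebraMap A A' s)

variable (h : Function.Bijective
  (Ideal.quotientMap (I.map (algebraMap A A')) (algebraMap A A') Ideal.le_comap_map))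

include h

lemma isMaximal_map_of_bijective_quotientMap (hI : I ≤ m) [hm : m.IsMaximal] :
    (m.map (algebraMap A A')).IsMaximal := by
  have hmax : (m.map (Ideal.Quotient.mk I)).IsMaximal :=
    Ideal.IsMaximal.map_of_surjective_of_ker_le Ideal.Quotient.mk_surjective (by rwa [Ideal.mk_ker])
  rw [← Ideal.isMaximal_map_iff_of_bijective _ h, Ideal.map_map, Ideal.quotientMap_comp_mk,
    ← Ideal.map_map] at hmax
  rw [← Ideal.comap_map_mk (Ideal.map_mono hI)]
  exact Ideal.comap_isMaximal_of_surjective _ Ideal.Quotient.mk_surjective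

lemma map_ne_top_of_bijective_quotientMap (hI : I ≤ m) (hm : m ≠ ⊤) :
    m.map (algebraMap A A') ≠ ⊤ := by
  obtain ⟨n, hn, hmn⟩ := Ideal.exists_le_maximal m hm
  exact ne_top_of_le_ne_top (isMaximal_map_of_bijective_quotientMap h (hI.trans hmn)).ne_top
    (Ideal.map_mono hmn)

end QuotientMap

lemma exists_mem_avoiding_not_isNoetherian_baseChange [IsNoetherianRing A] [Module.Flat A A']
    {s : A} [IsAdicComplete (Ideal.span {algebraMap A A' s}) A']
    (h : Function.Bijective (Ideal.quotientMap ((Ideal.span {s}).map (algebraMap A A'))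
      (algebraMap A A') Ideal.le_comap_map))
    [Nontrivial B] (hdiv : Function.Surjective (LinearMap.lsmul A B s))
    (htor : IsTorsionIdeal (Ideal.span {s}) B)
    (hK : IsNoetherian A (LinearMap.ker (LinearMap.lsmul A B s))) [m.IsMaximal] (hs : s ∈ m)
    {n : ℕ} (hm : m ^ n ≤ Module.annihilator A (LinearMap.ker (LinearMap.lsmul A B s)))
    {e : ℕ} (he : 1 ≤ e) (b : Ideal A') :
    ∃ z ∈ avoiding e b, ¬ IsNoetherian A' (LinearMap.ker (LinearMap.lsmul A' (A' ⊗[A] B) z)) := by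
  have := isNoetherianRing_of_surjective_quotientMap h.2
  have := isMaximal_map_of_bijective_quotientMap h ((Ideal.span_singleton_le_iff_mem m).2 hs)
  obtain ⟨ε⟩ := nonempty_baseChange_ker_lsmul_equiv A' B s
  have hnontrivial : Nontrivial (A' ⊗[A] B) := by
    have := nontrivial_ker_lsmul htor
    obtain ⟨⟨x, hsx⟩, hx⟩ := exists_ne (0 : LinearMap.ker (LinearMap.lsmul A B s))
    refine nontrivial_baseChange_of_map_ne_top A' (x := x)
      (map_ne_top_of_bijective_quotientMap h ((Ideal.span_singleton_le_iff_mem _).2 hsx) ?_)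
    exact fun htop => hx (Subtype.ext ((Ideal.torsionOf_eq_top_iff A x).1 htop))
  have hdiv' : Function.Surjective (LinearMap.lsmul A' (A' ⊗[A] B) (algebraMap A A' s)) := by
    rw [← lsmul_baseChange]
    exact LinearMap.lTensor_surjective A' hdiv
  have htor' : IsTorsionIdeal (Ideal.span {algebraMap A A' s}) (A' ⊗[A] B) := by
    simpa [Ideal.map_span] using IsTorsionIdeal.baseChange A' htor
  refine exists_mem_avoiding_not_isNoetherian hdiv' htor' (isNoetherian_of_linearEquiv ε)
    (J := m.map (algebraMap A A')) (n := n) ?_ he b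
  rw [← Ideal.map_pow, ← ε.annihilator_eq]
  exact (Ideal.map_mono hm).trans (map_annihilator_le_annihilator_baseChange A' _)

end BaseChange

section AdicCompletion

variable {A : Type u} [CommRing A] {I : Ideal A}

lemma bijective_quotientMap_adicCompletion (hI : I.FG) :
    Function.Bijective (Ideal.quotientMap (I.map (algebraMap A (AdicCompletion I A)))
      (algebraMap A (AdicCompletion I A)) Ideal.le_comap_map) := by
  have hker := AdicCompletion.ker_evalOneₐ_eq_map I hI
  refine ⟨Ideal.quotientMap_injective' fun a ha => ?_, fun y => ?_⟩
  · rw [Ideal.mem_comap, ← hker, RingHom.mem_ker] at ha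
    exact Ideal.Quotient.eq_zero_iff_mem.1 (((AdicCompletion.evalOneₐ I).commutes a).symm.trans ha)
  · obtain ⟨x, rfl⟩ := Ideal.Quotient.mk_surjective y
    obtain ⟨a, ha⟩ := Ideal.Quotient.mk_surjective (AdicCompletion.evalOneₐ I x)
    refine ⟨Ideal.Quotient.mk I a, Ideal.Quotient.eq.2 ?_⟩
    rw [← hker, RingHom.mem_ker, map_sub, sub_eq_zero]
    exact ((AdicCompletion.evalOneₐ I).commutes a).trans ha

lemma isAdicComplete_map_adicCompletion (hI : I.FG) :
    IsAdicComplete (I.map (algebraMap A (AdicCompletion I A))) (AdicCompletion I A) :=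
  (IsAdicComplete.map_algebraMap_iff (S := AdicCompletion I A)
    (M := AdicCompletion I A) I).2 (AdicCompletion.isAdicComplete hI)

end AdicCompletion

section DimensionChange

variable {A A' : Type u} [CommRing A] [CommRing A'] [Algebra A A']

variable (A') in
lemma ringKrullDim_quotient_map_le_of_isLocalization (T : Submonoid A) [IsLocalization T A']
    (c : Ideal A) : ringKrullDim (A' ⧸ c.map (algebraMap A A')) ≤ ringKrullDim (A ⧸ c) := by
  rw [ringKrullDim_quotient, ringKrullDim_quotient]
  refine Order.krullDim_le_of_strictMono (fun P : PrimeSpectrum.zeroLocus _ =>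
    (⟨PrimeSpectrum.comap (algebraMap A A') P, Ideal.map_le_iff_le_comap.1 P.2⟩ :
      PrimeSpectrum.zeroLocus (c : Set A))) (Monotone.strictMono_of_injective
        (fun P Q h => Ideal.comap_mono (f := algebraMap A A') h) fun P Q h => Subtype.ext ?_)
  exact PrimeSpectrum.localization_comap_injective A' T (congrArg Subtype.val h)

lemma ringKrullDim_quotient_map_le_of_surjective_quotientMap {I c : Ideal A} (hIc : I ≤ c)
    (h : Function.Surjective
      (Ideal.quotientMap (I.map (algebraMap A A')) (algebraMap A A') Ideal.le_comap_map)) :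
    ringKrullDim (A' ⧸ c.map (algebraMap A A')) ≤ ringKrullDim (A ⧸ c) := by
  refine ringKrullDim_le_of_surjective
    (Ideal.quotientMap (c.map (algebraMap A A')) (algebraMap A A') Ideal.le_comap_map) fun y => ?_
  obtain ⟨y, rfl⟩ := Ideal.Quotient.mk_surjective y
  obtain ⟨x, hx⟩ := h (Ideal.Quotient.mk _ y)
  obtain ⟨x, rfl⟩ := Ideal.Quotient.mk_surjective x
  refine ⟨Ideal.Quotient.mk c x, ?_⟩
  rw [Ideal.quotientMap_mk, Ideal.Quotient.eq] at hx ⊢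
  exact Ideal.map_mono hIc hx

end DimensionChange

/-! ### Divisible submodules after localization -/

section KerInfRange

variable {R : Type u} [CommRing R] {V : Type u} [AddCommGroup V] [Module R V] {s : R} {k : ℕ}

variable (V s) in
/-- The submodule `(0 :_V s) ∩ s ^ k V`. These decrease with `k`, and they measure how far an
`s`-torsion module `V` is from being `s`-divisible after replacing it by some `s ^ k V`. -/
def kerInfRange (k : ℕ) : Submodule R V :=
  LinearMap.ker (LinearMap.lsmul R V s) ⊓ LinearMap.range (LinearMap.lsmul R V (s ^ k))

lemma antitone_kerInfRange : Antitone (kerInfRange V s) := by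
  refine antitone_nat_of_succ_le fun k => inf_le_inf_left _ ?_
  rintro _ ⟨v, rfl⟩
  exact ⟨s • v, by simp [pow_succ', mul_smul]⟩

variable (V s k) in
lemma map_subtype_ker_lsmul_range_eq_kerInfRange :
    (LinearMap.ker (LinearMap.lsmul R (LinearMap.range (LinearMap.lsmul R V (s ^ k))) s)).map
      (Submodule.subtype _) = kerInfRange V s k := by
  ext x
  refine ⟨?_, fun hx => ⟨⟨x, hx.2⟩, Subtype.ext hx.1, rfl⟩⟩
  rintro ⟨y, hy, rfl⟩
  exact ⟨congrArg Subtype.val hy, y.2⟩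

variable (V s k) in
lemma nonempty_ker_lsmul_range_equiv_kerInfRange :
    Nonempty (LinearMap.ker (LinearMap.lsmul R (LinearMap.range (LinearMap.lsmul R V (s ^ k))) s)
      ≃ₗ[R] kerInfRange V s k) :=
  ⟨(Submodule.equivMapOfInjective _ (Submodule.subtype_injective _) _).trans
    (LinearEquiv.ofEq _ _ (map_subtype_ker_lsmul_range_eq_kerInfRange V s k))⟩

lemma exists_forall_kerInfRange_le [IsArtinian R (kerInfRange V s k)] :
    ∃ n ≥ k, ∀ m ≥ n, kerInfRange V s n ≤ kerInfRange V s m := by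
  obtain ⟨n, hn⟩ := IsArtinian.monotone_stabilizes (R := R) (M := kerInfRange V s k)
    { toFun := fun j => OrderDual.toDual ((kerInfRange V s j).comap (kerInfRange V s k).subtype)
      monotone' := fun i j hij => Submodule.comap_mono (antitone_kerInfRange hij) }
  refine ⟨max k n, le_max_left k n, fun m hm x hx => ?_⟩
  have heq : (kerInfRange V s (max k n)).comap (kerInfRange V s k).subtype =
      (kerInfRange V s m).comap (kerInfRange V s k).subtype :=
    (hn _ (le_max_right k n)).symm.trans (hn m ((le_max_right k n).trans hm))
  exact (SetLike.ext_iff.1 heq ⟨x, antitone_kerInfRange (le_max_left k n) hx⟩).1 hx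

lemma surjective_lsmul_range_of_forall_kerInfRange_le (htor : IsTorsionIdeal (Ideal.span {s}) V)
    (hstab : ∀ m ≥ k, kerInfRange V s k ≤ kerInfRange V s m) :
    Function.Surjective
      (LinearMap.lsmul R (LinearMap.range (LinearMap.lsmul R V (s ^ k))) s) := by
  rintro ⟨v, hv⟩
  obtain ⟨j, hj⟩ := isTorsionIdeal_span_singleton_iff.1 htor v
  induction j generalizing v with
  | zero => exact ⟨0, Subtype.ext (by simpa using hj.symm)⟩
  | succ j ih =>
    -- `s ^ j • v` lies in `s ^ (k + 1 + j) V`; correct `v` by the element of `s ^ (k + 1) V`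
    -- with the same multiple.
    have hmem : s ^ j • v ∈ kerInfRange V s k :=
      ⟨show s • s ^ j • v = 0 by rw [← mul_smul, ← pow_succ', hj], Submodule.smul_mem _ _ hv⟩
    obtain ⟨-, y, hy⟩ := hstab (k + 1 + j) (by omega) hmem
    have hy : s ^ j • s ^ (k + 1) • y = s ^ j • v := by
      rw [← mul_smul, ← pow_add, add_comm, ← hy, LinearMap.lsmul_apply]
    obtain ⟨⟨y', hy'⟩, hsy⟩ := ih (v - s ^ (k + 1) • y)
      (Submodule.sub_mem _ hv ⟨s • y, by simp [pow_succ', mul_smul, smul_comm s]⟩)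
      (by rw [smul_sub, hy, sub_self])
    refine ⟨⟨y' + s ^ k • y, Submodule.add_mem _ hy' ⟨y, rfl⟩⟩, Subtype.ext ?_⟩
    have hsy : s • y' = v - s ^ (k + 1) • y := congrArg Subtype.val hsy
    change s • (y' + s ^ k • y) = v
    rw [smul_add, hsy, ← mul_smul, ← pow_succ', sub_add_cancel]

variable (V s k) in
lemma localized_kerInfRange (T : Submonoid R) : (kerInfRange V s k).localized T =
    kerInfRange (LocalizedModule T V) (algebraMap R (Localization T) s) k := by
  have hmap (r : R) : (IsLocalizedModule.map T (LocalizedModule.mkLinearMap T V)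
      (LocalizedModule.mkLinearMap T V) (LinearMap.lsmul R V r)).extendScalarsOfIsLocalization T
        (Localization T) =
      LinearMap.lsmul _ (LocalizedModule T V) (algebraMap R (Localization T) r) := by
    ext x
    obtain ⟨⟨x, t⟩, rfl⟩ :=
      IsLocalizedModule.mk'_surjective T (LocalizedModule.mkLinearMap T V) x
    simp [IsLocalizedModule.map_mk', IsLocalizedModule.mk'_smul]
  rw [kerInfRange, Submodule.localized, Submodule.localized'_inf,
    LinearMap.localized'_ker_eq_ker_localizedMap _ _ _ (LocalizedModule.mkLinearMap T V),
    LinearMap.localized'_range_eq_range_localizedMap _ _ (LocalizedModule.mkLinearMap T V),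
    hmap, hmap, map_pow]
  rfl

variable (V s k) in
lemma nonempty_localizedModule_kerInfRange_equiv (T : Submonoid R) :
    Nonempty (LocalizedModule T (kerInfRange V s k) ≃ₗ[Localization T]
      kerInfRange (LocalizedModule T V) (algebraMap R (Localization T) s) k) := by
  rw [← localized_kerInfRange]
  exact ⟨((kerInfRange V s k).localizedEquiv T).symm⟩

end KerInfRange

section DivisibleLocalization

variable {R : Type u} [CommRing R] [IsNoetherianRing R]

lemma exists_pow_maximalIdeal_le_map {I q : Ideal R} [q.IsPrime] (hq : q ∈ I.minimalPrimes) :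
    ∃ n, IsLocalRing.maximalIdeal (Localization.AtPrime q) ^ n ≤
      I.map (algebraMap R (Localization.AtPrime q)) := by
  have := IsLocalization.isNoetherianRing q.primeCompl (Localization.AtPrime q) inferInstance
  refine Ideal.exists_pow_le_of_le_radical_of_fg ?_ (IsNoetherian.noetherian _)
  rw [IsLocalization.AtPrime.radical_map_of_mem_minimalPrimes _ q I hq,
    Localization.AtPrime.map_eq_maximalIdeal]

variable {W : Type u} [AddCommGroup W] [Module R W] {s : R}

lemma exists_forall_annihilator_kerInfRange_eq :
    ∃ k, ∀ m ≥ k, Module.annihilator R (kerInfRange W s m) =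
      Module.annihilator R (kerInfRange W s k) := by
  obtain ⟨k, hk⟩ := monotone_stabilizes_iff_noetherian.2 (inferInstanceAs (IsNoetherian R R))
    { toFun := fun k => Module.annihilator R (kerInfRange W s k)
      monotone' := fun i j hij => Submodule.annihilator_mono (antitone_kerInfRange hij) }
  exact ⟨k, fun m hm => (hk m hm).symm⟩

variable [IsNoetherian R (LinearMap.ker (LinearMap.lsmul R W s))]

lemma isArtinian_kerInfRange_localizedModule {k : ℕ} {q : Ideal R} [q.IsPrime]
    (hq : q ∈ (Module.annihilator R (kerInfRange W s k)).minimalPrimes) :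
    IsArtinian (Localization.AtPrime q) (kerInfRange (LocalizedModule q.primeCompl W)
      (algebraMap R (Localization.AtPrime q) s) k) := by
  obtain ⟨ε⟩ := nonempty_localizedModule_kerInfRange_equiv W s k q.primeCompl
  have : IsNoetherian R (kerInfRange W s k) := isNoetherian_of_le inf_le_left
  have := isArtinianRing_quotient_localization (T := q.primeCompl)
    (b := Module.annihilator R (kerInfRange W s k)) fun P hP hIP hPq => by
      have hPq : P ≤ q := fun x hx => by_contra fun hxq => Set.disjoint_left.1 hPq hxq hx
      rwa [le_antisymm hPq (hq.2 ⟨hP, hIP⟩ hPq)]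
  have := isArtinian_of_le_annihilator (map_le_annihilator_localizedModule (T := q.primeCompl)
    (le_refl (Module.annihilator R (kerInfRange W s k))))
  exact isArtinian_of_linearEquiv ε

lemma exists_divisible_submodule_localizedModule (htor : IsTorsionIdeal (Ideal.span {s}) W)
    (hne : ∀ k, kerInfRange W s k ≠ ⊥) :
    ∃ (q : Ideal R) (_ : q.IsPrime)
      (B : Submodule (Localization.AtPrime q) (LocalizedModule q.primeCompl W)),
      s ∈ q ∧ Nontrivial B ∧
      Function.Surjective (LinearMap.lsmul _ B (algebraMap R (Localization.AtPrime q) s)) ∧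
      IsNoetherian (Localization.AtPrime q)
        (LinearMap.ker (LinearMap.lsmul _ B (algebraMap R (Localization.AtPrime q) s))) ∧
      ∃ n, IsLocalRing.maximalIdeal (Localization.AtPrime q) ^ n ≤ Module.annihilator _
        (LinearMap.ker (LinearMap.lsmul _ B (algebraMap R (Localization.AtPrime q) s))) := by
  obtain ⟨k₀, hk₀⟩ := exists_forall_annihilator_kerInfRange_eq (W := W) (s := s)
  have hfin (k) : IsNoetherian R (kerInfRange W s k) := isNoetherian_of_le inf_le_left
  have htop : Module.annihilator R (kerInfRange W s k₀) ≠ ⊤ := fun h =>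
    hne k₀ (Submodule.annihilator_eq_top_iff.1 h)
  obtain ⟨q, hq⟩ := Ideal.nonempty_minimalPrimes htop
  have hqp : q.IsPrime := hq.1.1
  have := isArtinian_kerInfRange_localizedModule hq
  obtain ⟨k, hk, hstab⟩ := exists_forall_kerInfRange_le
    (V := LocalizedModule q.primeCompl W) (s := algebraMap R (Localization.AtPrime q) s) (k := k₀)
  have htor' : IsTorsionIdeal (Ideal.span {algebraMap R (Localization.AtPrime q) s})
      (LocalizedModule q.primeCompl W) := by
    simpa only [Ideal.map_span, Set.image_singleton] using isTorsionIdeal_localizedModule htor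
  obtain ⟨n, hn⟩ := exists_pow_maximalIdeal_le_map hq
  obtain ⟨ε⟩ := nonempty_localizedModule_kerInfRange_equiv W s k q.primeCompl
  obtain ⟨ε'⟩ := nonempty_ker_lsmul_range_equiv_kerInfRange (LocalizedModule q.primeCompl W)
    (algebraMap R (Localization.AtPrime q) s) k
  have hnontrivial : Nontrivial (LocalizedModule q.primeCompl (kerInfRange W s k)) :=
    Module.mem_support_iff_of_finite (p := ⟨q, hqp⟩).2 ((hk₀ k hk).trans_le hq.1.2)
  have : Nontrivial _ := (ε.trans ε'.symm).symm.toEquiv.nontrivial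
  have := IsLocalization.isNoetherianRing q.primeCompl (Localization.AtPrime q) inferInstance
  refine ⟨q, hqp, _, ?_, (Submodule.subtype_injective (LinearMap.ker (LinearMap.lsmul _ _
    (algebraMap R (Localization.AtPrime q) s)))).nontrivial,
    surjective_lsmul_range_of_forall_kerInfRange_le htor' hstab,
    isNoetherian_of_linearEquiv (ε.trans ε'.symm), n, hn.trans ?_⟩
  · exact hq.1.2 (Module.mem_annihilator.2 fun x => Subtype.ext x.2.1)
  · rw [← (ε.trans ε'.symm).annihilator_eq]
    exact map_le_annihilator_localizedModule (hk₀ k hk).ge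

end DivisibleLocalization

/-! ### Kernels that stay Noetherian after base change -/

section NoetherianKernels

section KerLsmul

variable {R : Type u} [CommRing R] {A B C : Type u} [AddCommGroup A] [Module R A]
  [AddCommGroup B] [Module R B] [AddCommGroup C] [Module R C] {f : A →ₗ[R] B} {g : B →ₗ[R] C}

lemma SerreClass.ker_lsmul_mem_of_injective (S : SerreClass R) (f : A →ₗ[R] B)
    (hf : Function.Injective f) (z : R) (hB : S.mem (LinearMap.ker (LinearMap.lsmul R B z))) :
    S.mem (LinearMap.ker (LinearMap.lsmul R A z)) := by
  refine S.of_injective (f.restrict (p := LinearMap.ker (LinearMap.lsmul R A z))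
    (q := LinearMap.ker (LinearMap.lsmul R B z)) fun x hx => ?_)
    (fun x y hxy => Subtype.ext (hf (congrArg Subtype.val hxy))) hB
  have hx : z • x = 0 := hx
  rw [LinearMap.mem_ker, LinearMap.lsmul_apply, ← map_smul, hx, map_zero]

lemma SerreClass.ker_lsmul_mem_of_ses (S : SerreClass R) (h : IsSES f g) (z : R) (hA : S.mem A)
    (hB : S.mem (LinearMap.ker (LinearMap.lsmul R B z))) :
    S.mem (LinearMap.ker (LinearMap.lsmul R C z)) := by
  have hcomp : g ∘ₗ LinearMap.lsmul R B z = LinearMap.lsmul R C z ∘ₗ g :=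
    LinearMap.ext fun x => map_smul g z x
  have hker := S.ker_comp_mem hB (S.ker_mem_of_exact h.exact hA)
  rw [hcomp] at hker
  refine S.of_surjective (g.restrict (p := LinearMap.ker (LinearMap.lsmul R C z ∘ₗ g))
    (q := LinearMap.ker (LinearMap.lsmul R C z)) fun x hx => hx) (fun y => ?_) hker
  obtain ⟨x, hx⟩ := h.surjective y.1
  exact ⟨⟨x, by rw [LinearMap.mem_ker, LinearMap.comp_apply, hx, y.2]⟩, Subtype.ext hx⟩

lemma IsSES.baseChange (R' : Type u) [CommRing R'] [Algebra R R'] [Module.Flat R R']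
    (h : IsSES f g) : IsSES (f.baseChange R') (g.baseChange R') :=
  ⟨Module.Flat.lTensor_preserves_injective_linearMap (M := R') f h.injective,
    LinearMap.lTensor_surjective R' h.surjective, Module.Flat.lTensor_exact R' h.exact⟩

end KerLsmul

variable {R : Type u} [CommRing R] {W : Type u} [AddCommGroup W] [Module R W]

lemma exists_injective_baseChange_of_submodule_localizedModule (T : Submonoid R) (A' : Type u)
    [CommRing A'] [Algebra (Localization T) A'] [Algebra R A'] [IsScalarTower R (Localization T) A']
    [Module.Flat (Localization T) A'] (B : Submodule (Localization T) (LocalizedModule T W)) :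
    ∃ f : A' ⊗[Localization T] B →ₗ[A'] A' ⊗[R] W, Function.Injective f := by
  let ε : LocalizedModule T W ≃ₗ[Localization T] Localization T ⊗[R] W :=
    (LocalizedModule.isBaseChange T W).equiv.symm
  let ε' : A' ⊗[Localization T] (Localization T ⊗[R] W) ≃ₗ[A'] A' ⊗[R] W :=
    TensorProduct.AlgebraTensorModule.cancelBaseChange R (Localization T) A' A' W
  exact ⟨ε'.toLinearMap ∘ₗ (ε.toLinearMap ∘ₗ B.subtype).baseChange A', ε'.injective.comp
    (Module.Flat.lTensor_preserves_injective_linearMap (M := A') (ε.toLinearMap ∘ₗ B.subtype)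
      (ε.injective.comp B.injective_subtype))⟩

lemma ringKrullDim_quotient_map_le_add_one {A A' : Type u} [CommRing A] [CommRing A']
    [IsNoetherianRing A'] [Algebra A A'] {s : A}
    [IsAdicComplete (Ideal.span {algebraMap A A' s}) A']
    (h : Function.Surjective (Ideal.quotientMap ((Ideal.span {s}).map (algebraMap A A'))
      (algebraMap A A') Ideal.le_comap_map)) (c : Ideal A) :
    ringKrullDim (A' ⧸ c.map (algebraMap A A')) ≤
      ringKrullDim (A ⧸ (c ⊔ Ideal.span {s})) + 1 := by
  have hmap : (c ⊔ Ideal.span {s}).map (algebraMap A A') =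
      c.map (algebraMap A A') ⊔ Ideal.span {algebraMap A A' s} := by
    rw [Ideal.map_sup, Ideal.map_span, Set.image_singleton]
  refine (ringKrullDim_quotient_le_succ _ (IsAdicComplete.le_jacobson_bot
    (Ideal.span {algebraMap A A' s}) (Ideal.mem_span_singleton_self _))).trans ?_
  gcongr
  rw [← hmap]
  exact ringKrullDim_quotient_map_le_of_surjective_quotientMap le_sup_right h

lemma ringKrullDim_quotient_map_le_of_mem_avoiding {e : ℕ} {b : Ideal R}
    {s : R} (hb : ringKrullDim (R ⧸ b) ≤ (e + 1 : ℕ)) (hs : s ∈ avoiding e b) (T : Submonoid R)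
    {A A' : Type u} [CommRing A] [Algebra R A] [IsLocalization T A] [CommRing A']
    [IsNoetherianRing A'] [Algebra A A'] [Algebra R A'] [IsScalarTower R A A']
    [IsAdicComplete (Ideal.span {algebraMap A A' (algebraMap R A s)}) A']
    (h : Function.Surjective (Ideal.quotientMap
      ((Ideal.span {algebraMap R A s}).map (algebraMap A A')) (algebraMap A A')
      Ideal.le_comap_map)) :
    ringKrullDim (A' ⧸ b.map (algebraMap R A')) ≤ (e + 1 : ℕ) :=
  calc ringKrullDim (A' ⧸ b.map (algebraMap R A'))
    _ = ringKrullDim (A' ⧸ (b.map (algebraMap R A)).map (algebraMap A A')) := by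
      rw [Ideal.map_map, ← IsScalarTower.algebraMap_eq]
    _ ≤ ringKrullDim (A ⧸ (b.map (algebraMap R A) ⊔ Ideal.span {algebraMap R A s})) + 1 :=
      ringKrullDim_quotient_map_le_add_one h _
    _ = ringKrullDim (A ⧸ (b ⊔ Ideal.span {s}).map (algebraMap R A)) + 1 := by
      rw [Ideal.map_sup, Ideal.map_span, Set.image_singleton]
    _ ≤ ringKrullDim (R ⧸ (b ⊔ Ideal.span {s})) + 1 := by
      gcongr
      exact ringKrullDim_quotient_map_le_of_isLocalization A T _
    _ ≤ (e + 1 : ℕ) := by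
      rw [Nat.cast_add, Nat.cast_one]
      gcongr
      exact ringKrullDim_quotient_sup_le hb hs

lemma isNoetherian_ker_lsmul_pow {s : R}
    (h : IsNoetherian R (LinearMap.ker (LinearMap.lsmul R W s))) (k : ℕ) :
    IsNoetherian R (LinearMap.ker (LinearMap.lsmul R W (s ^ k))) := by
  induction k with
  | zero =>
    have hinj : Function.Injective (LinearMap.lsmul R W (s ^ 0)) := fun x y hxy => by
      simpa using hxy
    rw [LinearMap.ker_eq_bot.2 hinj]
    infer_instance
  | succ k ih =>
    have hpow : LinearMap.lsmul R W (s ^ (k + 1)) =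
        LinearMap.lsmul R W s ∘ₗ LinearMap.lsmul R W (s ^ k) := by
      ext x
      simp [pow_succ', mul_smul, smul_comm s]
    rw [hpow]
    exact (SerreClass.noetherian R).ker_comp_mem ih h

lemma isNoetherian_of_kerInfRange_eq_bot {s : R} {k : ℕ}
    (h : IsNoetherian R (LinearMap.ker (LinearMap.lsmul R W s)))
    (htor : IsTorsionIdeal (Ideal.span {s}) W) (hk : kerInfRange W s k = ⊥) :
    IsNoetherian R W := by
  have hrange : LinearMap.range (LinearMap.lsmul R W (s ^ k)) = ⊥ := by
    by_contra hne
    have := Submodule.nontrivial_iff_ne_bot.2 hne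
    have := nontrivial_ker_lsmul
      (IsTorsionIdeal.of_injective htor (LinearMap.range (LinearMap.lsmul R W (s ^ k))).subtype
        (Submodule.injective_subtype _))
    obtain ⟨ε⟩ := nonempty_ker_lsmul_range_equiv_kerInfRange W s k
    exact Submodule.nontrivial_iff_ne_bot.1 ε.symm.toEquiv.nontrivial hk
  have hpow := isNoetherian_ker_lsmul_pow h k
  rw [LinearMap.ker_eq_top.2 (LinearMap.range_eq_bot.1 hrange)] at hpow
  exact isNoetherian_of_linearEquiv Submodule.topEquiv

/-- After every flat base change `R → R'` with `R'` Noetherian and `dim R'/bR' ≤ e + 1`, each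
element avoiding the minimal primes of `bR'` of coheight `> e` has a Noetherian kernel on
`R' ⊗ W`. -/
def NoetherianKernels (e : ℕ) (b : Ideal R) (W : Type u) [AddCommGroup W] [Module R W] : Prop :=
  ∀ (R' : Type u) [CommRing R'] [Algebra R R'] [IsNoetherianRing R'] [Module.Flat R R'],
    ringKrullDim (R' ⧸ b.map (algebraMap R R')) ≤ (e + 1 : ℕ) →
    ∀ z ∈ avoiding e (b.map (algebraMap R R')),
      IsNoetherian R' (LinearMap.ker (LinearMap.lsmul R' (R' ⊗[R] W) z))

namespace NoetherianKernels

variable {e : ℕ} {b : Ideal R} {s : R}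

lemma quotient (h : NoetherianKernels e b W) {L : Submodule R W} (hL : L.FG) :
    NoetherianKernels e b (W ⧸ L) := by
  intro R' _ _ _ _ hdim z hz
  have : Module.Finite R L := Module.Finite.iff_fg.2 hL
  have : IsNoetherian R' (R' ⊗[R] L) := inferInstance
  exact (SerreClass.noetherian R').ker_lsmul_mem_of_ses ((IsSES.of_submodule L).baseChange R') z
    this (h R' hdim z hz)

variable [IsNoetherianRing R]

lemma isNoetherian_ker_lsmul (h : NoetherianKernels e b W)
    (hb : ringKrullDim (R ⧸ b) ≤ (e + 1 : ℕ)) (hs : s ∈ avoiding e b) :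
    IsNoetherian R (LinearMap.ker (LinearMap.lsmul R W s)) := by
  have hmap : b.map (algebraMap R R) = b := by rw [Algebra.algebraMap_self, Ideal.map_id]
  exact (SerreClass.noetherian R).ker_lsmul_mem_of_injective
    (TensorProduct.lid R W).symm.toLinearMap (LinearEquiv.injective _) s
    (h R (by rwa [hmap]) s (by rwa [hmap]))

lemma exists_kerInfRange_eq_bot (h : NoetherianKernels e b W) (he : 1 ≤ e)
    (hb : ringKrullDim (R ⧸ b) ≤ (e + 1 : ℕ)) (hs : s ∈ avoiding e b)
    (htor : IsTorsionIdeal (Ideal.span {s}) W) : ∃ k, kerInfRange W s k = ⊥ := by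
  by_contra! hne
  have := h.isNoetherian_ker_lsmul hb hs
  obtain ⟨q, _, B, hsq, _, hdiv, hK, n, hn⟩ := exists_divisible_submodule_localizedModule htor hne
  set A := Localization.AtPrime q
  set s' := algebraMap R A s
  have : IsNoetherianRing A := IsLocalization.isNoetherianRing q.primeCompl A inferInstance
  have : Module.Flat R A := IsLocalization.flat A q.primeCompl
  let A' := AdicCompletion (Ideal.span {s'}) A
  have hfg : (Ideal.span {s'}).FG := IsNoetherian.noetherian _
  have hbij := bijective_quotientMap_adicCompletion hfg
  have : IsAdicComplete (Ideal.span {algebraMap A A' s'}) A' := by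
    simpa only [Ideal.map_span, Set.image_singleton] using isAdicComplete_map_adicCompletion hfg
  have : IsNoetherianRing A' := isNoetherianRing_of_surjective_quotientMap hbij.2
  have : Module.Flat A A' := AdicCompletion.flat_of_isNoetherian _
  have : Module.Flat R A' := Module.Flat.trans R A A'
  have hdim : ringKrullDim (A' ⧸ b.map (algebraMap R A')) ≤ (e + 1 : ℕ) :=
    ringKrullDim_quotient_map_le_of_mem_avoiding hb hs q.primeCompl hbij.2
  have hsm : s' ∈ IsLocalRing.maximalIdeal A := by
    rw [← Localization.AtPrime.map_eq_maximalIdeal]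
    exact Ideal.mem_map_of_mem _ hsq
  have htorB : IsTorsionIdeal (Ideal.span {s'}) B := by
    refine IsTorsionIdeal.of_injective ?_ B.subtype B.injective_subtype
    simpa only [Ideal.map_span, Set.image_singleton] using isTorsionIdeal_localizedModule htor
  obtain ⟨z, hz, hnot⟩ := exists_mem_avoiding_not_isNoetherian_baseChange hbij hdiv htorB hK hsm hn
    he (b.map (algebraMap R A'))
  obtain ⟨f, hf⟩ := exists_injective_baseChange_of_submodule_localizedModule q.primeCompl A' B
  exact hnot ((SerreClass.noetherian A').ker_lsmul_mem_of_injective f hf z (h A' hdim z hz))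

lemma isNoetherian_of_genericallyFG_mem (h : NoetherianKernels e b W) (he : 1 ≤ e)
    (hb : ringKrullDim (R ⧸ b) ≤ (e + 1 : ℕ))
    (hW : (SerreClass.genericallyFG (avoiding e b)).mem W) : IsNoetherian R W := by
  obtain ⟨s, hs, L, hL, hsL⟩ := hW
  have htor : IsTorsionIdeal (Ideal.span {s}) (W ⧸ L) := by
    rw [isTorsionIdeal_span_singleton_iff]
    refine L.mkQ_surjective.forall.2 fun w => (hsL w).imp fun k hk => ?_
    rwa [← map_smul, Submodule.mkQ_apply, Submodule.Quotient.mk_eq_zero]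
  have hquot := h.quotient hL
  obtain ⟨k, hk⟩ := hquot.exists_kerInfRange_eq_bot he hb hs htor
  have : Module.Finite R L := Module.Finite.iff_fg.2 hL
  exact (SerreClass.noetherian R).of_ses (IsSES.of_submodule L)
    (isNoetherian_of_isNoetherianRing_of_finite R L)
    (isNoetherian_of_kerInfRange_eq_bot (hquot.isNoetherian_ker_lsmul hb hs) htor hk)

end NoetherianKernels

end NoetherianKernels

/-! ### Comparison of the two models of `Ext` -/

section ProjectiveResolution

variable {R : Type u} [CommRing R] {X Y : ModuleCat.{u} R} (P : ProjectiveResolution X)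

lemma smul_extMk {n : ℕ} (r : R) (f : P.complex.X n ⟶ Y) (m : ℕ) (hm : n + 1 = m)
    (hf : P.complex.d m n ≫ f = 0) :
    r • P.extMk f m hm hf = P.extMk (r • f) m hm (by rw [Linear.comp_smul, hf, smul_zero]) := by
  rw [← Abelian.Ext.comp_mk₀_id (r • P.extMk f m hm hf), Abelian.Ext.smul_comp,
    ← Abelian.Ext.comp_smul, ← Abelian.Ext.mk₀_smul, P.extMk_comp_mk₀]
  simp only [Linear.comp_smul, Category.comp_id]

lemma extMk_zero_eq_zero_iff (f : P.complex.X 0 ⟶ Y) (m : ℕ) (hm : 0 + 1 = m)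
    (hf : P.complex.d m 0 ≫ f = 0) : P.extMk f m hm hf = 0 ↔ f = 0 := by
  refine ⟨fun h => ?_, fun h => by subst h; simp⟩
  rw [← P.extEquivCohomologyClass.apply_eq_iff_eq, P.extEquivCohomologyClass_extMk,
    P.extEquivCohomologyClass_zero, CochainComplex.HomComplex.CohomologyClass.mk_eq_zero_iff,
    CochainComplex.HomComplex.Cocycle.toSingleMk_mem_coboundaries_iff _ _ _ _ _ 1 (by lia)] at h
  obtain ⟨g, hg⟩ := h
  rw [(P.cochainComplex.isZero_of_isStrictlyLE 0 1).eq_of_tgt (P.cochainComplex.d _ 1) 0,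
    Limits.zero_comp] at hg
  exact (Preadditive.IsIso.comp_left_eq_zero _ _).1 hg.symm

/-- The map from the `n`-cocycles of `Hom(P, Y)`, for a projective resolution `P` of `X`, to the
group `Abelian.Ext X Y n`, through which the derived-functor `Ext` of `extObj` is compared with the
latter. -/
noncomputable def cocycleToExt (n : ℕ) :
    LinearMap.ker ((P.complex.linearYonedaObj R Y).sc n).g.hom →ₗ[R] Abelian.Ext X Y n where
  toFun z := P.extMk z.1 ((ComplexShape.up ℕ).next n) (by simp) z.2
  map_add' x y := (P.add_extMk ..).symm
  map_smul' r x := (smul_extMk P ..).symm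

lemma surjective_cocycleToExt (n : ℕ) :
    Function.Surjective (cocycleToExt (Y := Y) P n) := fun α => by
  obtain ⟨f, hf, h⟩ := P.extMk_surjective α ((ComplexShape.up ℕ).next n) (by simp)
  exact ⟨⟨f, hf⟩, h⟩

lemma ker_cocycleToExt (n : ℕ) : LinearMap.ker (cocycleToExt (Y := Y) P n) =
    LinearMap.range ((P.complex.linearYonedaObj R Y).sc n).moduleCatToCycles := by
  ext z
  cases n with
  | zero =>
    refine (extMk_zero_eq_zero_iff P _ _ (by simp) z.2).trans ?_
    refine ⟨fun h => ⟨0, Subtype.ext ?_⟩, fun ⟨g, hg⟩ => ?_⟩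
    · rw [map_zero]
      exact h.symm
    · rw [← congrArg Subtype.val hg]
      change P.complex.d 0 ((ComplexShape.up ℕ).prev 0) ≫ g = 0
      rw [P.complex.shape _ _ (by simp)]
      exact Limits.zero_comp (f := (show P.complex.X _ ⟶ Y from g))
  | succ n =>
    refine (P.extMk_eq_zero_iff _ _ (by simp) z.2 ((ComplexShape.up ℕ).prev (n + 1))
      (by simp)).trans ?_
    exact ⟨fun ⟨g, hg⟩ => ⟨g, Subtype.ext hg⟩, fun ⟨g, hg⟩ => ⟨g, congrArg Subtype.val hg⟩⟩

lemma nonempty_extObj_equiv (N M : ModuleCat.{u} R) (n : ℕ) :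
    Nonempty (extObj N M n ≃ₗ[R] Abelian.Ext N M n) :=
  let P := projectiveResolution N
  let e₁ := (P.isoExt n M ≪≫
    ((P.complex.linearYonedaObj R M).sc n).moduleCatHomologyIso).toLinearEquiv
  let e₂ := (Submodule.quotEquivOfEq _ _ (ker_cocycleToExt (Y := M) P n)).symm.trans
    ((cocycleToExt P n).quotKerEquivOfSurjective (surjective_cocycleToExt P n))
  ⟨e₁.trans e₂⟩

end ProjectiveResolution

section DimensionShift

variable {R : Type u} [CommRing R] {A B C A' B' C' : Type u} [AddCommGroup A] [Module R A]
  [AddCommGroup B] [Module R B] [AddCommGroup C] [Module R C] [AddCommGroup A'] [Module R A']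
  [AddCommGroup B'] [Module R B'] [AddCommGroup C'] [Module R C'] {f : A →ₗ[R] B} {g : B →ₗ[R] C}

lemma nonempty_equiv_of_right_exact {f' : A' →ₗ[R] B'} {g' : B' →ₗ[R] C'}
    (h : Function.Exact f g) (hg : Function.Surjective g) (h' : Function.Exact f' g')
    (hg' : Function.Surjective g') (eA : A ≃ₗ[R] A') (eB : B ≃ₗ[R] B')
    (hc : ∀ a, eB (f a) = f' (eA a)) : Nonempty (C ≃ₗ[R] C') := by
  have hcomp : (eB : B →ₗ[R] B') ∘ₗ f = f' ∘ₗ eA := LinearMap.ext hc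
  have hker : (LinearMap.ker g).map (eB : B →ₗ[R] B') = LinearMap.ker g' := by
    rw [h.linearMap_ker_eq, h'.linearMap_ker_eq, ← LinearMap.range_comp, hcomp,
      LinearMap.range_comp, LinearEquiv.range, Submodule.map_top]
  exact ⟨(g.quotKerEquivOfSurjective hg).symm ≪≫ₗ
    Submodule.Quotient.equiv _ _ eB hker ≪≫ₗ g'.quotKerEquivOfSurjective hg'⟩

namespace ModExt

variable [Module.Projective R B] (h : IsSES f g) (M : Type u) [AddCommGroup M] [Module R M]
include h

lemma surjective_comapδ_of_projective (i : ℕ) : Function.Surjective (comapδ h M i) := fun y => by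
  have : Subsingleton (ModExt R B M (i + 1)) := subsingleton_of_projective i
  exact (exact_comapδ_comap h M i y).1 (Subsingleton.elim _ _)

lemma bijective_comapδ_succ_of_projective (i : ℕ) : Function.Bijective (comapδ h M (i + 1)) := by
  have : Subsingleton (ModExt R B M (i + 1)) := subsingleton_of_projective i
  refine ⟨?_, surjective_comapδ_of_projective h M (i + 1)⟩
  rw [injective_iff_map_eq_zero]
  intro x hx
  obtain ⟨y, rfl⟩ := (exact_comap_comapδ h M (i + 1) x).1 hx
  rw [Subsingleton.elim y 0, map_zero]

end ModExt

end DimensionShift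

/-! ### Flat base change of `Ext` -/

section FlatBaseChange

namespace ModExt

variable {R : Type u} [CommRing R] (R' : Type u) [CommRing R'] [Algebra R R']
  [Module.Flat R R'] (M : Type u) [AddCommGroup M] [Module R M]

/-- Flat base change for `Ext⁰(N, M) = Hom(N, M)`, with `N` finitely presented. -/
noncomputable def zeroBaseChange (N : Type u) [AddCommGroup N] [Module R N]
    [Module.FinitePresentation R N] :
    R' ⊗[R] ModExt R N M 0 ≃ₗ[R'] ModExt R' (R' ⊗[R] N) (R' ⊗[R] M) 0 :=
  (zeroEquiv N M).baseChange R R' _ _ ≪≫ₗ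
    (Module.FinitePresentation.isBaseChange_map R N M R').equiv ≪≫ₗ
    (zeroEquiv (R' ⊗[R] N) (R' ⊗[R] M)).symm

lemma zeroBaseChange_comap {A B : Type u} [AddCommGroup A] [Module R A]
    [AddCommGroup B] [Module R B] [Module.FinitePresentation R A] [Module.FinitePresentation R B]
    (f : A →ₗ[R] B) (x : R' ⊗[R] ModExt R B M 0) :
    zeroBaseChange R' M A ((comap f M 0).baseChange R' x) =
      comap (f.baseChange R') (R' ⊗[R] M) 0 (zeroBaseChange R' M B x) := by
  induction x with
  | zero => simp only [map_zero]
  | add x y hx hy => simp only [map_add, hx, hy]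
  | tmul r x =>
    apply (zeroEquiv _ _).injective
    rw [zeroEquiv_comap]
    simp only [zeroBaseChange, LinearEquiv.trans_apply, LinearEquiv.apply_symm_apply,
      LinearMap.baseChange_tmul, LinearEquiv.baseChange_tmul, IsBaseChange.equiv_tmul,
      zeroEquiv_comap]
    ext a
    simp [LinearMap.baseChangeHom]

lemma nonempty_baseChange_equiv_one {A B C : Type u} [AddCommGroup A] [Module R A]
    [AddCommGroup B] [Module R B] [AddCommGroup C] [Module R C] [Module.FinitePresentation R A]
    [Module.FinitePresentation R B] [Module.Projective R B] {f : A →ₗ[R] B} {g : B →ₗ[R] C}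
    (h : IsSES f g) :
    Nonempty (R' ⊗[R] ModExt R C M 1 ≃ₗ[R'] ModExt R' (R' ⊗[R] C) (R' ⊗[R] M) 1) :=
  have hsurj := surjective_comapδ_of_projective h M 0
  nonempty_equiv_of_right_exact (f := (comap f M 0).baseChange R')
    (g := (comapδ h M 0).baseChange R') (lTensor_exact R' (exact_comap_comapδ h M 0) hsurj)
    (LinearMap.lTensor_surjective R' hsurj) (exact_comap_comapδ (h.baseChange R') (R' ⊗[R] M) 0)
    (surjective_comapδ_of_projective (h.baseChange R') (R' ⊗[R] M) 0)
    (zeroBaseChange R' M _) (zeroBaseChange R' M _) (zeroBaseChange_comap R' M _)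

variable [IsNoetherianRing R]

lemma nonempty_baseChange_equiv (i : ℕ) (N : Type u) [AddCommGroup N] [Module R N]
    [Module.Finite R N] :
    Nonempty (R' ⊗[R] ModExt R N M i ≃ₗ[R'] ModExt R' (R' ⊗[R] N) (R' ⊗[R] M) i) := by
  induction i generalizing N with
  | zero =>
    have := Module.finitePresentation_of_finite R N
    exact ⟨zeroBaseChange R' M N⟩
  | succ i ih =>
    obtain ⟨n, p, hp⟩ := Module.Finite.exists_fin' R N
    have h := IsSES.of_surjective hp
    cases i with
    | zero =>
      have := Module.finitePresentation_of_finite R (LinearMap.ker p)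
      exact nonempty_baseChange_equiv_one R' M h
    | succ i =>
      obtain ⟨ε⟩ := ih (LinearMap.ker p)
      have hbij := bijective_comapδ_succ_of_projective h M i
      have hbij' := bijective_comapδ_succ_of_projective (h.baseChange R') (R' ⊗[R] M) i
      exact ⟨(LinearEquiv.ofBijective _ hbij).symm.baseChange R R' _ _ ≪≫ₗ ε ≪≫ₗ
        LinearEquiv.ofBijective _ hbij'⟩

lemma nonempty_quotient_baseChange_equiv (b : Ideal R) (i : ℕ) :
    Nonempty (R' ⊗[R] ModExt R (R ⧸ b) M i ≃ₗ[R']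
      ModExt R' (R' ⧸ b.map (algebraMap R R')) (R' ⊗[R] M) i) := by
  obtain ⟨ε⟩ := nonempty_baseChange_equiv (R := R) R' M i (R ⧸ b)
  exact ⟨ε ≪≫ₗ comapEquiv (Ideal.qoutMapEquivTensorQout R' (I := b)) (R' ⊗[R] M) i⟩

end ModExt

end FlatBaseChange

/-! ### Cofiniteness -/

section Cofiniteness

section InductionStep

variable {R : Type u} [CommRing R] [IsNoetherianRing R] {a b : Ideal R} {l : List R} {e : ℕ}
  {M : Type u} [AddCommGroup M] [Module R M]

lemma FiniteExtBound.noetherianKernels_ext (H : FiniteExtBound.{u} e)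
    (hb : b = a ⊔ Ideal.ofList l) (hM : IsTorsionIdeal a M)
    (h : ∀ i ≤ e + 1 + l.length, (SerreClass.noetherian R).mem (ModExt R (R ⧸ b) M i)) (i : ℕ) :
    NoetherianKernels e b (ModExt R (R ⧸ b) M i) := by
  intro R' _ _ _ _ hdim z hz
  have hb' : b.map (algebraMap R R') =
      a.map (algebraMap R R') ⊔ Ideal.ofList (l.map (algebraMap R R')) := by
    rw [hb, Ideal.map_sup, Ideal.map_ofList]
  have h' (j : ℕ) (hj : j ≤ e + 1 + (l.map (algebraMap R R')).length) :
      (SerreClass.noetherian R').mem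
        (ModExt R' (R' ⧸ b.map (algebraMap R R')) (R' ⊗[R] M) j) := by
    obtain ⟨ε⟩ := ModExt.nonempty_quotient_baseChange_equiv R' M b j
    have : IsNoetherian R (ModExt R (R ⧸ b) M j) := h j (by rwa [List.length_map] at hj)
    have : IsNoetherian R' (R' ⊗[R] ModExt R (R ⧸ b) M j) := inferInstance
    exact isNoetherian_of_linearEquiv ε
  obtain ⟨ε⟩ := ModExt.nonempty_quotient_baseChange_equiv R' M b i
  exact (SerreClass.noetherian R').ker_lsmul_mem_of_injective ε.toLinearMap ε.injective z
    (H.isNoetherian_ker_lsmul_ext hb' hdim (IsTorsionIdeal.baseChange R' hM) h' hz i)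

end InductionStep

lemma FiniteExtBound.succ {e : ℕ} (he : 1 ≤ e) (H : FiniteExtBound.{u} e) :
    FiniteExtBound.{u} (e + 1) := by
  intro R _ _ a b l hb hdim M _ _ hM h i
  exact (H.noetherianKernels_ext hb hM h i).isNoetherian_of_genericallyFG_mem he hdim
    (genericallyFG_ext_mem hb hM (fun j hj => h j (by omega)) i)

lemma finiteExtBound {e : ℕ} (he : 1 ≤ e) : FiniteExtBound.{u} e := by
  induction e, he using Nat.le_induction with
  | base => exact finiteExtBound_one
  | succ e he ih => exact ih.succ he

variable {R : Type u} [CommRing R] {b : Ideal R} {M : Type u} [AddCommGroup M] [Module R M]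

lemma isNoetherian_ext_of_forall_le [IsNoetherianRing R] {d : ℕ}
    (hdim : ringKrullDim (R ⧸ b) ≤ (d : ℕ)) (hM : IsTorsionIdeal b M)
    (h : ∀ i ≤ d, IsNoetherian R (ModExt R (R ⧸ b) M i)) (i : ℕ) :
    IsNoetherian R (ModExt R (R ⧸ b) M i) := by
  rcases Nat.eq_zero_or_pos d with rfl | hd
  · have h₀ := ((SerreClass.noetherian R).ext_quotient_zero_mem_iff b).1 (h 0 le_rfl)
    exact (ext_finiteLength_mem hM (finiteLength_mem_of_ringKrullDim_le_zero hdim h₀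
      le_annihilator_torsionByIdeal) i).1
  · exact finiteExtBound hd R b b [] (by simp) hdim M hM h i

lemma IsTorsionIdeal.support_subset_zeroLocus (hM : IsTorsionIdeal b M) :
    Module.support R M ⊆ PrimeSpectrum.zeroLocus (b : Set R) := by
  intro p hp a ha
  obtain ⟨m, hm⟩ := Module.mem_support_iff_exists_annihilator.1 hp
  obtain ⟨n, hn⟩ := hM m
  refine p.2.mem_of_pow_mem n (hm ?_)
  rw [Submodule.mem_annihilator_span_singleton]
  exact hn _ (Ideal.pow_mem_pow ha n)

lemma finite_extIdeal_iff [IsNoetherianRing R] (M : ModuleCat.{u} R) (i : ℕ) :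
    Module.Finite R (extIdeal b i M) ↔ IsNoetherian R (ModExt R (R ⧸ b) M i) := by
  obtain ⟨ε⟩ := nonempty_extObj_equiv (ModuleCat.of R (R ⧸ b)) M i
  exact (Module.Finite.equiv_iff ε).trans
    ⟨fun _ => isNoetherian_of_isNoetherianRing_of_finite R _, fun _ => inferInstance⟩

end Cofiniteness

end ExtCofinite

/-- Yang–Shen, Lemma 3.6: let `𝔞` be a proper ideal of a commutative noetherian ring `R` with
`dim R/𝔞 = d ≥ 0`. An `𝔞`-torsion `R`-module `M` is `𝔞`-cofinite if and only if
`Ext^i_R(R/𝔞, M)` is finitely generated for all `i ≤ d`. -/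
theorem isCofinite_iff_of_dim_quotient
    {R : Type u} [CommRing R] [IsNoetherianRing R]
    (𝔞 : Ideal R) (ha : 𝔞 ≠ ⊤) (d : ℕ) (hdim : ringKrullDim (R ⧸ 𝔞) = d)
    (M : ModuleCat.{u} R) (htor : IsTorsionIdeal 𝔞 M) :
    IsCofinite 𝔞 M ↔ ∀ i : ℕ, i ≤ d → Module.Finite R (extIdeal 𝔞 i M) := by
  refine ⟨fun h i _ => h.2 i, fun h =>
    ⟨ExtCofinite.IsTorsionIdeal.support_subset_zeroLocus htor, fun i => ?_⟩⟩
  have hle (j : ℕ) (hj : j ≤ d) : IsNoetherian R (ExtCofinite.ModExt R (R ⧸ 𝔞) M j) :=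
    (ExtCofinite.finite_extIdeal_iff M j).1 (h j hj)
  exact (ExtCofinite.finite_extIdeal_iff M i).2
    (ExtCofinite.isNoetherian_ext_of_forall_le hdim.le htor hle i)
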